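/- arXiv:1008.3097 — 3 statements merged into one kernel-verified Lean document; each statement's English description precedes it below -/
import Mathlib

section
/- Let ε ∈ (0,1) satisfy condition (★). Let A : (0, 2π²) → (0, ∞) be a continuous function with the following barrier property: for every s₀ ∈ (0, 2π²) there exist δ > 0 and a twice continuously differentiable function u : (s₀−δ, s₀+δ) → (0, ∞) such that u(s₀) = A(s₀), u(s) ≥ A(s) for all s ∈ (s₀−δ, s₀+δ), and u''(s₀) ≤ min{ 4π/u(s₀)² − 3u'(s₀)²/(4u(s₀)) − 3/u(s₀), −u'(s₀)²/(2u(s₀)) − 2ε/u(s₀) }. Let f : (−π², π²) → (0, (4π)^{3/2}] be any twice continuously differentiable function with f''(s) = min{ (36π − f'(s)²)/(6 f(s)) − (9/2) f(s)^{−1/3}, −3ε f(s)^{−1/3} }, f(0) = (4π)^{3/2}, f'(0) = 0, and f(s) → 0 as s → ±π². Then A(s)^{3/2} ≥ f(s − π²) for all s ∈ (0, 2π²). -/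
open Real MeasureTheory Set Filter

/-- Condition (★). -/
def CondStar (ε : ℝ) : Prop :=
  ∀ y z : ℝ, z ∈ Set.Ico (4 * π / (3 - 2 * ε)) (4 * π) →
    2 * (1 - ε) * y = z ^ (1/2 : ℝ) * (4 * π - z) →
    (∫ x in (0:ℝ)..y,
        (36 * π - 27 * (1 - ε) * y ^ (2/3 : ℝ) - 9 * ε * x ^ (2/3 : ℝ)) ^ (-(1/2) : ℝ)) +
    (∫ x in y..(z ^ (3/2 : ℝ)),
        (36 * π - 18 * (1 - ε) * y * x ^ (-(1/3) : ℝ) - 9 * x ^ (2/3 : ℝ)) ^ (-(1/2) : ℝ))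
      < π ^ 2

/-!
The function `F = A^(3/2)` satisfies `F'' ≤ H(F, F'²)` in the barrier sense, where `H` is the
right-hand side of the equation for `f`. As `H < 0`, `F` is strictly concave. Along an ascent of `F`
consider `q = F'²` as a function of `x = F`: then `dq/dx ≤ 2H(x, q)`, so a function `V` with
`V' ≥ 2H(x, V)` and `V ≤ 0` at the maximum stays below `q`, and the ascent to the value `x` takes at
most the time `∫ V^(-1/2)` over `[0, x]`. For barriers this is seen at an interior local minimum of
`∫ V^(-1/2) - s` (upper limit `F s`), which `V' > 2H(x, V)` would exclude.

If the maximum of `F` were smaller than `(4π)^(3/2)`, then the functions `V` appearing in (★) would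
show that the ascent and the descent take less than `π²` each, whereas together they take `2π²`. So
`V = 36π - 9x^(2/3)` is admissible. Let `T(x)` be the primitive of its `V^(-1/2)`, so that
`T((4π)^(3/2)) = π²`; then `min(s, 2π² - s) ≤ T(F(s))` wherever `F(s) ≤ (4π)^(3/2)`. On the other
side, monotonicity of Bray's mass along `f` gives `T(f(r)) ≤ π² - |r|`. As `T` is
increasing, `f(s - π²) ≤ F(s)`.
-/

open Topology intervalIntegral

section LocalMinima

variable {g g' : ℝ → ℝ} {g'' a b c d s₀ : ℝ}

theorem not_isLocalMin_of_hasDerivAt_of_neg (hg : ∀ᶠ s in 𝓝 s₀, HasDerivAt g (g' s) s)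
    (hg' : HasDerivAt g' g'' s₀) (hneg : g'' < 0) : ¬IsLocalMin g s₀ := by
  intro hmin
  have hderiv : deriv g =ᶠ[𝓝 s₀] g' := hg.mono fun s hs ↦ hs.deriv
  have hderiv₂ : deriv (deriv g) s₀ = g'' := hderiv.deriv_eq.trans hg'.deriv
  have hmax : IsLocalMax g s₀ := isLocalMax_of_deriv_deriv_neg (hderiv₂.trans_lt hneg)
    hmin.deriv_eq_zero hg.self_of_nhds.continuousAt
  have hconst : g =ᶠ[𝓝 s₀] fun _ ↦ g s₀ := by
    filter_upwards [hmin, hmax] with s h₁ h₂ using le_antisymm h₂ h₁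
  have hzero : deriv (deriv g) s₀ = 0 := by
    rw [hconst.deriv.deriv_eq]
    simp
  exact hneg.ne (hderiv₂.symm.trans hzero)

theorem min_lt_of_forall_not_isLocalMin (hg : ContinuousOn g (Icc a d))
    (hmin : ∀ s ∈ Ioo a d, ¬IsLocalMin g s) (hc : c ∈ Ioo a d) : min (g a) (g d) < g c := by
  by_contra! hle
  have hac := Ioo_subset_Icc_self hc
  obtain ⟨m, hm, hgm⟩ := isCompact_Icc.exists_isMinOn ⟨c, hac⟩ hg
  have hends : ∀ p ∈ Ioo a d, ¬IsMinOn g (Icc a d) p := fun p hp h ↦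
    hmin p hp (h.isLocalMin (Icc_mem_nhds hp.1 hp.2))
  have hcm : ¬g c ≤ g m := fun h ↦ hends c hc fun s hs ↦ h.trans (hgm hs)
  rcases hm.1.eq_or_lt with rfl | ham
  · exact hcm (hle.trans (min_le_left _ _))
  rcases hm.2.eq_or_lt with rfl | hmd
  · exact hcm (hle.trans (min_le_right _ _))
  exact hends m ⟨ham, hmd⟩ hgm

theorem strictAntiOn_of_forall_not_isLocalMin (hg : ContinuousOn g (Ico a d))
    (hmin : ∀ s ∈ Ioo a d, ¬IsLocalMin g s) (hac : a < c) (hgc : g c < g a) :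
    StrictAntiOn g (Ico c d) := by
  have hlt {p q r : ℝ} (hp : a ≤ p) (hpq : p < q) (hqr : q < r) (hr : r < d) :
      min (g p) (g r) < g q :=
    min_lt_of_forall_not_isLocalMin (hg.mono fun s hs ↦ ⟨hp.trans hs.1, hs.2.trans_lt hr⟩)
      (fun s hs ↦ hmin s ⟨hp.trans_lt hs.1, hs.2.trans hr⟩) ⟨hpq, hqr⟩
  have hlt_left {p : ℝ} (hcp : c ≤ p) (hpd : p < d) : g p < g a := by
    rcases hcp.eq_or_lt with rfl | hcp
    · exact hgc
    · rcases min_lt_iff.1 (hlt le_rfl hac hcp hpd) with h | h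
      · exact absurd h hgc.not_gt
      · exact h.trans hgc
  intro p hp q hq hpq
  rcases min_lt_iff.1 (hlt le_rfl (hac.trans_le hp.1) hpq hq.2) with h | h
  · exact absurd h (hlt_left hp.1 hp.2).not_gt
  · exact h

theorem strictConcaveOn_of_forall_not_isLocalMin {s : Set ℝ} (hs : Convex ℝ s)
    (hg : ContinuousOn g s)
    (hmin : ∀ k, ∀ x ∈ interior s, ¬IsLocalMin (fun x ↦ g x - k * x) x) :
    StrictConcaveOn ℝ s g := by
  refine strictConcaveOn_of_slope_strict_anti_adjacent hs fun {x y z} hx hz hxy hyz ↦ ?_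
  have hxz : x < z := hxy.trans hyz
  set k := (g z - g x) / (z - x)
  have hsub : Icc x z ⊆ s := hs.ordConnected.out hx hz
  have hIoo : Ioo x z ⊆ interior s := interior_Icc (a := x) (b := z) ▸ interior_mono hsub
  have hchord : g x - k * x = g z - k * z := by
    have : k * (z - x) = g z - g x := div_mul_cancel₀ _ (sub_pos.2 hxz).ne'
    linarith
  have hlt := min_lt_of_forall_not_isLocalMin (g := fun x ↦ g x - k * x)
    ((hg.mono hsub).sub (by fun_prop)) (fun p hp ↦ hmin k p (hIoo hp)) ⟨hxy, hyz⟩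
  simp only [hchord, min_self] at hlt
  calc (g z - g y) / (z - y) < k := by rw [div_lt_iff₀ (sub_pos.2 hyz)]; linarith
    _ < (g y - g x) / (y - x) := by rw [lt_div_iff₀ (sub_pos.2 hxy)]; linarith

theorem strictMonoOn_of_strictConcaveOn_of_isMaxOn {s : Set ℝ}
    (hg : StrictConcaveOn ℝ s g) (hb : b ∈ s) (hbs : ∀ x ∈ s, x ≤ b) (hmax : IsMaxOn g s b) :
    StrictMonoOn g s := by
  intro x hx y hy hxy
  rcases (hbs y hy).eq_or_lt with rfl | hyb
  · refine (hmax hx).lt_of_ne fun h ↦ hxy.ne ?_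
    exact hg.eq_of_isMaxOn (fun z hz ↦ (hmax hz).trans h.ge) hmax hx hb
  · have hxb : x < b := hxy.trans hyb
    have hseg : y ∈ openSegment ℝ x b := by rw [openSegment_eq_Ioo hxb]; exact ⟨hxy, hyb⟩
    have hlt := hg.lt_on_openSegment hx hb hxb.ne hseg
    rwa [min_eq_left (hmax hx)] at hlt

end LocalMinima

section Barriers

variable {H : ℝ → ℝ → ℝ} {F : ℝ → ℝ} {L b s₀ : ℝ}

/-- `F'' ≤ H(F, F'²)` at `s₀` in the barrier sense: the inequality holds at `s₀` for some function
touching `F` from above there. The witnesses `v'` and `v''` are its derivatives. -/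
def BarrierSupersolutionAt (H : ℝ → ℝ → ℝ) (F : ℝ → ℝ) (s₀ : ℝ) : Prop :=
  ∃ (v v' : ℝ → ℝ) (v'' : ℝ), (∀ᶠ s in 𝓝 s₀, HasDerivAt v (v' s) s) ∧ HasDerivAt v' v'' s₀ ∧
    v s₀ = F s₀ ∧ (∀ᶠ s in 𝓝 s₀, F s ≤ v s) ∧ v'' ≤ H (F s₀) (v' s₀ ^ 2)

theorem BarrierSupersolutionAt.reflect {c : ℝ} (h : BarrierSupersolutionAt H F (c - s₀)) :
    BarrierSupersolutionAt H (fun s ↦ F (c - s)) s₀ := by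
  obtain ⟨v, v', v'', hv, hv', heq, hle, hH⟩ := h
  have htendsto : Tendsto (fun s ↦ c - s) (𝓝 s₀) (𝓝 (c - s₀)) :=
    (continuous_const.sub continuous_id).tendsto s₀
  refine ⟨fun s ↦ v (c - s), fun s ↦ -v' (c - s), v'', ?_, ?_, heq, htendsto.eventually hle, ?_⟩
  · filter_upwards [htendsto.eventually hv] with s hs using hs.comp_const_sub c s
  · simpa using (hv'.comp_const_sub c s₀).fun_neg
  · simpa using hH

theorem BarrierSupersolutionAt.not_isLocalMin_sub_linear (h : BarrierSupersolutionAt H F s₀)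
    (hneg : ∀ q, H (F s₀) q < 0) (k : ℝ) : ¬IsLocalMin (fun s ↦ F s - k * s) s₀ := by
  obtain ⟨v, v', v'', hv, hv', heq, hle, hH⟩ := h
  intro hmin
  refine not_isLocalMin_of_hasDerivAt_of_neg (g := fun s ↦ v s - k * s) (g' := fun s ↦ v' s - k)
    ?_ (hv'.sub_const k) (hH.trans_lt (hneg _)) ?_
  · filter_upwards [hv] with s hs
    simpa using hs.fun_sub ((hasDerivAt_id s).const_mul k)
  · filter_upwards [hmin, hle] with s hs hs'
    linarith

/-- A positive continuous function on `(0, L)` satisfying `F'' ≤ H(F, F'²)` in the barrier sense. -/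
structure BarrierSupersolutionOn (H : ℝ → ℝ → ℝ) (F : ℝ → ℝ) (L : ℝ) : Prop where
  pos : ∀ s ∈ Ioo 0 L, 0 < F s
  continuousOn : ContinuousOn F (Ioo 0 L)
  barrier : ∀ s ∈ Ioo 0 L, BarrierSupersolutionAt H F s

/-- The ascending part of a barrier supersolution: it is strictly concave on `(0, b]` and attains
its maximum at `b`. -/
structure BarrierAscent (H : ℝ → ℝ → ℝ) (F : ℝ → ℝ) (b : ℝ) : Prop where
  pos : ∀ s ∈ Ioc 0 b, 0 < F s
  continuousOn : ContinuousOn F (Ioc 0 b)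
  strictConcaveOn : StrictConcaveOn ℝ (Ioc 0 b) F
  isMaxOn : IsMaxOn F (Ioc 0 b) b
  barrier : ∀ s ∈ Ioo 0 b, BarrierSupersolutionAt H F s

namespace BarrierSupersolutionOn

theorem reflect (hF : BarrierSupersolutionOn H F L) :
    BarrierSupersolutionOn H (fun s ↦ F (L - s)) L := by
  have hmaps : MapsTo (fun s ↦ L - s) (Ioo 0 L) (Ioo 0 L) := fun s hs ↦
    ⟨sub_pos.2 hs.2, sub_lt_self L hs.1⟩
  exact ⟨fun s hs ↦ hF.pos _ (hmaps hs), hF.continuousOn.comp (by fun_prop) hmaps,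
    fun s hs ↦ (hF.barrier _ (hmaps hs)).reflect⟩

theorem strictConcaveOn (hF : BarrierSupersolutionOn H F L)
    (hneg : ∀ x q, 0 < x → H x q < 0) : StrictConcaveOn ℝ (Ioo 0 L) F :=
  strictConcaveOn_of_forall_not_isLocalMin (convex_Ioo 0 L) hF.continuousOn fun k s hs ↦
    have hs : s ∈ Ioo 0 L := interior_subset hs
    (hF.barrier s hs).not_isLocalMin_sub_linear (fun q ↦ hneg _ q (hF.pos s hs)) k

theorem barrierAscent (hF : BarrierSupersolutionOn H F L) (hneg : ∀ x q, 0 < x → H x q < 0)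
    {δ : ℝ} (hδ : 0 < δ) (hδb : δ < b) (hbL : b < L) (hmax : IsMaxOn F (Icc δ b) b) :
    BarrierAscent H F b := by
  have hsub : Ioc 0 b ⊆ Ioo 0 L := fun s hs ↦ ⟨hs.1, hs.2.trans_lt hbL⟩
  have hconc := (hF.strictConcaveOn hneg).subset hsub (convex_Ioc 0 b)
  have hlocal : IsLocalMaxOn F (Ioc 0 b) b := by
    filter_upwards [inter_mem_nhdsWithin _ (Ioi_mem_nhds hδb)] with s hs
    exact hmax ⟨hs.2.le, hs.1.2⟩
  exact {
    pos := fun s hs ↦ hF.pos s (hsub hs)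
    continuousOn := hF.continuousOn.mono hsub
    strictConcaveOn := hconc
    isMaxOn := IsMaxOn.of_isLocalMaxOn_of_concaveOn ⟨hδ.trans hδb, le_rfl⟩ hlocal hconc.concaveOn
    barrier := fun s hs ↦ hF.barrier s (hsub ⟨hs.1, hs.2.le⟩) }

end BarrierSupersolutionOn

theorem BarrierAscent.apply_lt_apply (hF : BarrierAscent H F b) {s t : ℝ} (hs : 0 < s)
    (hst : s < t) (htb : t ≤ b) : F s < F t :=
  strictMonoOn_of_strictConcaveOn_of_isMaxOn hF.strictConcaveOn
    ⟨(hs.trans hst).trans_le htb, le_rfl⟩ (fun _ hr ↦ hr.2) hF.isMaxOn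
    ⟨hs, hst.le.trans htb⟩ ⟨hs.trans hst, htb⟩ hst

end Barriers

section PhaseComparison

variable {H : ℝ → ℝ → ℝ} {F V V' T : ℝ → ℝ} {b : ℝ}

theorem rpow_neg_half {x : ℝ} (hx : 0 ≤ x) : x ^ (-(1 / 2) : ℝ) = (√x)⁻¹ := by
  rw [rpow_neg hx, sqrt_eq_rpow]

theorem exists_mem_nhds_monotoneOn {T T' : ℝ → ℝ} {x : ℝ}
    (hT : ∀ᶠ y in 𝓝 x, HasDerivAt T (T' y) y) (hT' : ∀ᶠ y in 𝓝 x, 0 ≤ T' y) :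
    ∃ U ∈ 𝓝 x, MonotoneOn T U := by
  obtain ⟨r, hr, hball⟩ := Metric.eventually_nhds_iff_ball.1 (hT.and hT')
  refine ⟨Metric.ball x r, Metric.ball_mem_nhds x hr,
    monotoneOn_of_hasDerivWithinAt_nonneg (convex_ball x r) (f' := T') ?_ ?_ ?_⟩
  · exact fun y hy ↦ (hball y hy).1.continuousAt.continuousWithinAt
  · exact fun y hy ↦ (hball y (interior_subset hy)).1.hasDerivWithinAt
  · exact fun y hy ↦ (hball y (interior_subset hy)).2

/- At a critical point of `T ∘ F - id` the speed is `F' = √V(F)`, so that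
`(T ∘ F)'' = V(F)^(-1/2) (F'' - V'(F) / 2) < 0`. -/
theorem BarrierSupersolutionAt.not_isLocalMin_comp_sub_id {s₀ V'₀ : ℝ}
    (hF : BarrierSupersolutionAt H F s₀) (hFcont : ContinuousAt F s₀)
    (hT : ∀ᶠ x in 𝓝 (F s₀), HasDerivAt T (V x ^ (-(1 / 2) : ℝ)) x)
    (hV : HasDerivAt V V'₀ (F s₀)) (hVpos : 0 < V (F s₀)) (hH : 2 * H (F s₀) (V (F s₀)) < V'₀) :
    ¬IsLocalMin (fun s ↦ T (F s) - s) s₀ := by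
  obtain ⟨v, v', v'', hv, hv', heq, hle, hv''⟩ := hF
  intro hmin
  have hvcont : Tendsto v (𝓝 s₀) (𝓝 (F s₀)) := heq ▸ hv.self_of_nhds.continuousAt
  obtain ⟨U, hU, hTmono⟩ := exists_mem_nhds_monotoneOn hT
    ((hV.continuousAt.eventually (lt_mem_nhds hVpos)).mono fun x hx ↦ rpow_nonneg hx.le _)
  have hminv : IsLocalMin (fun s ↦ T (v s) - s) s₀ := by
    filter_upwards [hmin, hle, hvcont hU, hFcont hU] with s hs hs' hvU hFU
    have := hTmono hFU hvU hs'
    rw [heq]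
    linarith
  have hderiv : ∀ᶠ s in 𝓝 s₀, HasDerivAt (fun s ↦ T (v s) - s)
      (V (v s) ^ (-(1 / 2) : ℝ) * v' s - 1) s := by
    filter_upwards [hv, hvcont.eventually hT] with s hs hs'
    exact (hs'.comp s hs).sub (hasDerivAt_id' s)
  have hspeed : v' s₀ = √(V (F s₀)) := by
    have hcrit := hminv.hasDerivAt_eq_zero hderiv.self_of_nhds
    rw [heq, rpow_neg_half hVpos.le] at hcrit
    have := (sqrt_pos.2 hVpos).ne'
    field_simp at hcrit
    linarith
  have hspeed_sq : v' s₀ ^ 2 = V (F s₀) := by rw [hspeed, sq_sqrt hVpos.le]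
  have hderiv₂ : HasDerivAt (fun s ↦ V (v s) ^ (-(1 / 2) : ℝ) * v' s - 1)
      (V (F s₀) ^ (-(1 / 2) : ℝ) * (v'' - V'₀ / 2)) s₀ := by
    have hVv : HasDerivAt (fun s ↦ V (v s)) (V'₀ * v' s₀) s₀ :=
      (heq ▸ hV : HasDerivAt V V'₀ (v s₀)).comp s₀ hv.self_of_nhds
    refine (((hVv.rpow_const (.inl (heq ▸ hVpos.ne'))).mul hv').sub_const 1).congr_deriv ?_
    rw [heq, rpow_sub_one hVpos.ne']
    field_simp
    rw [hspeed_sq]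
    ring
  refine not_isLocalMin_of_hasDerivAt_of_neg hderiv hderiv₂ ?_ hminv
  rw [hspeed_sq] at hv''
  exact mul_neg_of_pos_of_neg (rpow_pos_of_pos hVpos _) (by linarith)

theorem exists_first_zero {p q : ℝ} (hV : ContinuousOn V (Icc p q)) (hpq : p ≤ q) (hp : 0 < V p)
    (hq : V q ≤ 0) : ∃ x ∈ Ioc p q, V x = 0 ∧ ∀ y ∈ Ico p x, 0 < V y := by
  have hzero {y : ℝ} (hy : y ∈ Icc p q) (hVy : V y ≤ 0) : ∃ x ∈ Icc p y, V x = 0 :=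
    intermediate_value_Icc' hy.1 (hV.mono (Icc_subset_Icc_right hy.2)) ⟨hVy, hp.le⟩
  have hcompact : IsCompact (Icc p q ∩ V ⁻¹' {0}) :=
    isCompact_Icc.of_isClosed_subset (hV.preimage_isClosed_of_isClosed isClosed_Icc
      isClosed_singleton) inter_subset_left
  obtain ⟨x, ⟨hx, hVx⟩, hleast⟩ := hcompact.exists_isLeast (hzero (right_mem_Icc.2 hpq) hq)
  refine ⟨x, ⟨hx.1.lt_of_ne ?_, hx.2⟩, hVx, fun y hy ↦ ?_⟩
  · rintro rfl
    exact hp.ne' hVx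
  · by_contra! hVy
    have hyq : y ≤ q := hy.2.le.trans hx.2
    obtain ⟨z, hz, hVz⟩ := hzero ⟨hy.1, hyq⟩ hVy
    exact ((hleast ⟨⟨hz.1, hz.2.trans hyq⟩, hVz⟩).trans hz.2).not_gt hy.2

theorem hasDerivAt_integral_of_continuousOn_Ico {Q : ℝ → ℝ} {p q x : ℝ}
    (hQ : ContinuousOn Q (Ico p q)) (hx : x ∈ Ioo p q) :
    HasDerivAt (fun x ↦ ∫ y in p..x, Q y) (Q x) x := by
  have hIoo : ContinuousOn Q (Ioo p q) := hQ.mono Ioo_subset_Ico_self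
  refine integral_hasDerivAt_right ?_ ?_ (hIoo.continuousAt (isOpen_Ioo.mem_nhds hx))
  · refine (hQ.mono ?_).intervalIntegrable
    rw [uIcc_of_le hx.1.le]
    exact Icc_subset_Ico_right hx.2
  · exact hIoo.stronglyMeasurableAtFilter isOpen_Ioo x hx

theorem continuousOn_integral_of_continuousOn_Ico {Q : ℝ → ℝ} {p q : ℝ}
    (hQ : ContinuousOn Q (Ico p q)) : ContinuousOn (fun x ↦ ∫ y in p..x, Q y) (Ico p q) := by
  intro x hx
  obtain ⟨r, hxr, hrq⟩ := exists_between hx.2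
  have hpr : p ≤ r := hx.1.trans hxr.le
  have hcont := continuousOn_primitive_interval (μ := volume) (f := Q) (a := p) (b := r) <| by
    rw [uIcc_of_le hpr]
    exact (hQ.mono (Icc_subset_Ico_right hrq)).integrableOn_Icc
  rw [uIcc_of_le hpr] at hcont
  refine (hcont x ⟨hx.1, hxr.le⟩).mono_of_mem_nhdsWithin ?_
  filter_upwards [inter_mem_nhdsWithin _ (Iio_mem_nhds hxr)] with y hy
  exact ⟨hy.1.1, hy.2.le⟩

namespace BarrierAscent

theorem continuousAt (hF : BarrierAscent H F b) {s : ℝ} (hs : s ∈ Ioo 0 b) : ContinuousAt F s :=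
  hF.continuousOn.continuousAt (Ioc_mem_nhds hs.1 hs.2)

theorem slope_lt_slope (hF : BarrierAscent H F b) {r s t : ℝ} (hr : 0 < r) (hrs : r < s)
    (hst : s < t) (htb : t < b) : (F b - F t) / (b - t) < (F s - F r) / (s - r) := by
  have hs : 0 < s := hr.trans hrs
  have hsb : s < b := hst.trans htb
  exact (hF.strictConcaveOn.slope_anti_adjacent ⟨hs, hsb.le⟩ ⟨hs.trans hsb, le_rfl⟩ hst htb).trans
    (hF.strictConcaveOn.slope_anti_adjacent ⟨hr, (hrs.trans hsb).le⟩ ⟨hs.trans hst, htb.le⟩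
      hrs hst)

/- A strictly concave ascent keeps a positive slope `κ` up to an interior time `c'`, whereas the
speed `√V` prescribed by `T` tends to `0` there. -/
theorem not_strictAntiOn_comp_sub_id (hF : BarrierAscent H F b) {c c' : ℝ} (hc : 0 < c)
    (hcc' : c < c') (hc'b : c' < b) (hVcont : ContinuousAt V (F c')) (hV : V (F c') = 0)
    (hVpos : ∀ x ∈ Ioo (F c) (F c'), 0 < V x)
    (hT : ∀ x ∈ Ioo (F c) (F c'), HasDerivAt T (V x ^ (-(1 / 2) : ℝ)) x) :
    ¬StrictAntiOn (fun s ↦ T (F s) - s) (Ico c c') := by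
  intro hanti
  set κ := (F b - F c') / (b - c')
  have hκ : 0 < κ := div_pos (sub_pos.2 (hF.apply_lt_apply (hc.trans hcc') hc'b le_rfl))
    (sub_pos.2 hc'b)
  have hslow : ∀ᶠ r in 𝓝[<] c', ∀ x ∈ Icc (F r) (F c'), V x < κ ^ 2 := by
    have hFc' : Tendsto F (𝓝[<] c') (𝓝 (F c')) :=
      (hF.continuousAt ⟨hc.trans hcc', hc'b⟩).mono_left nhdsWithin_le_nhds
    exact (hFc'.Icc tendsto_const_nhds).eventually
      (eventually_smallSets_forall.2 (hVcont.eventually (gt_mem_nhds (hV ▸ by positivity))))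
  obtain ⟨r, hVr, hcr, hrc'⟩ := (hslow.and (Ioo_mem_nhdsLT hcc')).exists
  obtain ⟨s, hrs, hsc'⟩ := exists_between hrc'
  have hr : 0 < r := hc.trans hcr
  have hs : 0 < s := hr.trans hrs
  have hsb : s < b := hsc'.trans hc'b
  have hFc : F c < F r := hF.apply_lt_apply hc hcr (hrs.trans hsb).le
  have hFrs : F r < F s := hF.apply_lt_apply hr hrs hsb.le
  have hFc' : F s < F c' := hF.apply_lt_apply hs hsc' hc'b.le
  obtain ⟨ξ, hξ, hξT⟩ := exists_hasDerivAt_eq_slope T _ hFrs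
    (fun x hx ↦ (hT x ⟨hFc.trans_le hx.1, hx.2.trans_lt hFc'⟩).continuousAt.continuousWithinAt)
    (fun x hx ↦ hT x ⟨hFc.trans hx.1, hx.2.trans hFc'⟩)
  have hVξ : 0 < V ξ := hVpos ξ ⟨hFc.trans hξ.1, hξ.2.trans hFc'⟩
  have hspeed : √(V ξ) < κ := (sqrt_lt' hκ).2 (hVr ξ ⟨hξ.1.le, (hξ.2.trans hFc').le⟩)
  have htime : F s - F r < √(V ξ) * (s - r) := by
    have hdefect := hanti ⟨hcr.le, hrc'⟩ ⟨(hcr.trans hrs).le, hsc'⟩ hrs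
    rw [rpow_neg_half hVξ.le, eq_div_iff (sub_pos.2 hFrs).ne',
      inv_mul_eq_iff_eq_mul₀ (sqrt_pos.2 hVξ).ne'] at hξT
    rw [hξT]
    exact mul_lt_mul_of_pos_left (by linarith) (sqrt_pos.2 hVξ)
  have hslope : κ < (F s - F r) / (s - r) := hF.slope_lt_slope hr hrs hsc' hc'b
  rw [lt_div_iff₀ (sub_pos.2 hrs)] at hslope
  nlinarith [sub_pos.2 hrs]

theorem exists_first_time_zero (hF : BarrierAscent H F b) {t₁ t₂ : ℝ} (ht₁ : 0 < t₁)
    (ht : t₁ < t₂) (ht₂ : t₂ < b) (hVcont : ContinuousOn V (Icc (F t₁) (F b)))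
    (hVb : V (F b) < 0) (hpos : ∀ x ∈ Icc (F t₁) (F t₂), 0 < V x) :
    ∃ c ∈ Ioo t₂ b, V (F c) = 0 ∧ ∀ x ∈ Ico (F t₁) (F c), 0 < V x := by
  have hFt : F t₁ < F t₂ := hF.apply_lt_apply ht₁ ht ht₂.le
  have hFt₂ : F t₂ < F b := hF.apply_lt_apply (ht₁.trans ht) ht₂ le_rfl
  obtain ⟨x, hx, hVx, hVlt⟩ := exists_first_zero hVcont (hFt.trans hFt₂).le
    (hpos _ (left_mem_Icc.2 hFt.le)) hVb.le
  have hxt₂ : F t₂ < x := by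
    by_contra! hle
    exact (hpos x ⟨hx.1.le, hle⟩).ne' hVx
  have hxb : x < F b := hx.2.lt_of_ne fun h ↦ hVb.ne (h ▸ hVx)
  obtain ⟨c, hc, rfl⟩ := intermediate_value_Ioo ht₂.le
    (hF.continuousOn.mono fun s hs ↦ ⟨(ht₁.trans ht).trans_le hs.1, hs.2⟩) ⟨hxt₂, hxb⟩
  exact ⟨c, hc, hVx, hVlt⟩

/- The time defect `s ↦ ∫ V^(-1/2) - s` along the ascent has no local minimum, so if it is ever
negative it keeps decreasing, which is impossible near the first zero of `V`. -/
theorem sub_le_integral_of_lt (hF : BarrierAscent H F b)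
    (hV : ∀ x ∈ Ioc 0 (F b), HasDerivAt V (V' x) x) (hH : ∀ x ∈ Ioc 0 (F b), 2 * H x (V x) < V' x)
    (hVb : V (F b) < 0) {t₁ t₂ : ℝ} (ht₁ : 0 < t₁) (ht : t₁ < t₂) (ht₂ : t₂ < b)
    (hpos : ∀ x ∈ Icc (F t₁) (F t₂), 0 < V x) :
    t₂ - t₁ ≤ ∫ x in (F t₁)..(F t₂), V x ^ (-(1 / 2) : ℝ) := by
  have hFt₁ : 0 < F t₁ := hF.pos t₁ ⟨ht₁, (ht.trans ht₂).le⟩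
  have hFt : F t₁ < F t₂ := hF.apply_lt_apply ht₁ ht ht₂.le
  have hVcont : ContinuousOn V (Icc (F t₁) (F b)) := fun x hx ↦
    (hV x ⟨hFt₁.trans_le hx.1, hx.2⟩).continuousAt.continuousWithinAt
  obtain ⟨c, hc, hVc, hVlt⟩ := hF.exists_first_time_zero ht₁ ht ht₂ hVcont hVb hpos
  have hFc : F c < F b := hF.apply_lt_apply (ht₁.trans (ht.trans hc.1)) hc.2 le_rfl
  have hmem {s : ℝ} (hs : s ∈ Ico t₁ c) : s ∈ Ioo 0 b := ⟨ht₁.trans_le hs.1, hs.2.trans hc.2⟩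
  have hmaps : MapsTo F (Ico t₁ c) (Ico (F t₁) (F c)) := fun s hs ↦
    ⟨hs.1.eq_or_lt.elim (fun h ↦ h ▸ le_rfl) fun h ↦
      (hF.apply_lt_apply ht₁ h (hmem hs).2.le).le, hF.apply_lt_apply (hmem hs).1 hs.2 hc.2.le⟩
  have hQ : ContinuousOn (fun x ↦ V x ^ (-(1 / 2) : ℝ)) (Ico (F t₁) (F c)) :=
    (hVcont.mono fun y hy ↦ ⟨hy.1, (hy.2.trans hFc).le⟩).rpow_const fun y hy ↦ .inl (hVlt y hy).ne'
  have hT := fun y hy ↦ hasDerivAt_integral_of_continuousOn_Ico (x := y) hQ hy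
  have hmin : ∀ s ∈ Ioo t₁ c,
      ¬IsLocalMin (fun s ↦ (∫ x in (F t₁)..(F s), V x ^ (-(1 / 2) : ℝ)) - s) s := fun s hs ↦ by
    have hs₀ := hmem (Ioo_subset_Ico_self hs)
    have hFs : F s ∈ Ioo (F t₁) (F c) :=
      ⟨hF.apply_lt_apply ht₁ hs.1 hs₀.2.le, (hmaps (Ioo_subset_Ico_self hs)).2⟩
    have hFs' : F s ∈ Ioc 0 (F b) := ⟨hFt₁.trans hFs.1, (hFs.2.trans hFc).le⟩
    exact (hF.barrier s hs₀).not_isLocalMin_comp_sub_id (hF.continuousAt hs₀)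
      (eventually_of_mem (Ioo_mem_nhds hFs.1 hFs.2) hT) (hV _ hFs')
      (hVlt _ (Ioo_subset_Ico_self hFs)) (hH _ hFs')
  by_contra! hlt
  have hanti := strictAntiOn_of_forall_not_isLocalMin
    (((continuousOn_integral_of_continuousOn_Ico hQ).comp
      (hF.continuousOn.mono fun s hs ↦ Ioo_subset_Ioc_self (hmem hs)) hmaps).sub continuousOn_id)
    hmin ht (by simp only [id, Function.comp, Pi.sub_apply, integral_same]; linarith)
  have hVc' : ContinuousAt V (F c) := (hV _ ⟨hFt₁.trans_le (hmaps ⟨ht.le, hc.1⟩).1 |>.trans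
    (hmaps ⟨ht.le, hc.1⟩).2, hFc.le⟩).continuousAt
  exact hF.not_strictAntiOn_comp_sub_id (ht₁.trans ht) hc.1 hc.2 hVc' hVc
    (fun y hy ↦ hVlt y ⟨hFt.le.trans hy.1.le, hy.2⟩) (fun y hy ↦ hT y ⟨hFt.trans hy.1, hy.2⟩) hanti

end BarrierAscent

end PhaseComparison

section BrayInequality

variable {F W W' : ℝ → ℝ} {ε b : ℝ}

/-- The right-hand side `H(x, q)` of the comparison equation `f'' = H(f, f'²)`. -/
noncomputable def brayRHS (ε x q : ℝ) : ℝ :=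
  min ((36 * π - q) / (6 * x) - 9 / 2 * x ^ (-(1 / 3) : ℝ)) (-3 * ε * x ^ (-(1 / 3) : ℝ))

theorem brayRHS_le_left (ε x q : ℝ) :
    brayRHS ε x q ≤ (36 * π - q) / (6 * x) - 9 / 2 * x ^ (-(1 / 3) : ℝ) :=
  min_le_left _ _

theorem brayRHS_le_right (ε x q : ℝ) : brayRHS ε x q ≤ -3 * ε * x ^ (-(1 / 3) : ℝ) :=
  min_le_right _ _

theorem brayRHS_neg (hε : 0 < ε) {x : ℝ} (q : ℝ) (hx : 0 < x) : brayRHS ε x q < 0 :=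
  (brayRHS_le_right ε x q).trans_lt (mul_neg_of_neg_of_pos (by linarith) (rpow_pos_of_pos hx _))

theorem two_mul_brayRHS_sub_le {x q r : ℝ} (hx : 0 < x) (hr : 0 ≤ r) :
    2 * brayRHS ε x (q - r) ≤ 2 * brayRHS ε x q + r / (3 * x) := by
  have hshift : (36 * π - (q - r)) / (6 * x) = (36 * π - q) / (6 * x) + r / (3 * x) / 2 := by
    field_simp
    ring
  have hr' : 0 ≤ r / (3 * x) := by positivity
  have hmin : brayRHS ε x (q - r) - r / (3 * x) / 2 ≤ brayRHS ε x q :=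
    le_min (by linarith [brayRHS_le_left ε x (q - r)]) (by linarith [brayRHS_le_right ε x (q - r)])
  linarith

theorem integral_rpow_neg_half_le_of_mul_le {V : ℝ → ℝ} {p q θ : ℝ} (hpq : p ≤ q)
    (hW : ContinuousOn W (Icc p q)) (hV : ContinuousOn V (Icc p q)) (hpos : ∀ x ∈ Icc p q, 0 < W x)
    (hθ : 0 < θ) (hle : ∀ x ∈ Icc p q, θ * W x ≤ V x) :
    ∫ x in p..q, V x ^ (-(1 / 2) : ℝ) ≤
      θ ^ (-(1 / 2) : ℝ) * ∫ x in p..q, W x ^ (-(1 / 2) : ℝ) := by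
  have hθW : ∀ x ∈ Icc p q, 0 < θ * W x := fun x hx ↦ mul_pos hθ (hpos x hx)
  rw [← intervalIntegral.integral_const_mul]
  refine integral_mono_on hpq ?_ ?_ fun x hx ↦ ?_
  · exact (hV.rpow_const fun x hx ↦
      .inl ((hθW x hx).trans_le (hle x hx)).ne').intervalIntegrable_of_Icc hpq
  · exact (continuousOn_const.mul (hW.rpow_const fun x hx ↦
      .inl (hpos x hx).ne')).intervalIntegrable_of_Icc hpq
  · rw [← mul_rpow hθ.le (hpos x hx).le]
    exact rpow_le_rpow_of_nonpos (hθW x hx) (hle x hx) (by norm_num)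

theorem le_integral_of_forall_sub_mul {ψ : ℝ → ℝ} {p q c : ℝ} (hpq : p ≤ q)
    (hW : ContinuousOn W (Icc p q)) (hψ : ContinuousOn ψ (Icc p q)) (hpos : ∀ x ∈ Icc p q, 0 < W x)
    (h : ∀ η > 0, (∀ x ∈ Icc p q, 0 < W x - η * ψ x) →
      c ≤ ∫ x in p..q, (W x - η * ψ x) ^ (-(1 / 2) : ℝ)) :
    c ≤ ∫ x in p..q, W x ^ (-(1 / 2) : ℝ) := by
  obtain ⟨C, hC⟩ := isCompact_Icc.bddAbove_image (hψ.div hW fun x hx ↦ (hpos x hx).ne')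
  set K := max C 1
  have hK : 0 < K := zero_lt_one.trans_le (le_max_right _ _)
  have hψK : ∀ x ∈ Icc p q, ψ x ≤ K * W x := fun x hx ↦ (div_le_iff₀ (hpos x hx)).1
    ((hC (mem_image_of_mem _ hx)).trans (le_max_left _ _))
  have hscaled : ∀ θ ∈ Ioo (0 : ℝ) 1,
      c ≤ θ ^ (-(1 / 2) : ℝ) * ∫ x in p..q, W x ^ (-(1 / 2) : ℝ) := fun θ hθ ↦ by
    have hη : 0 < (1 - θ) / K := div_pos (sub_pos.2 hθ.2) hK
    have hlower : ∀ x ∈ Icc p q, θ * W x ≤ W x - (1 - θ) / K * ψ x := fun x hx ↦ by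
      have := mul_le_mul_of_nonneg_left (hψK x hx) hη.le
      rw [← mul_assoc, div_mul_cancel₀ _ hK.ne'] at this
      linarith
    exact (h _ hη fun x hx ↦ (mul_pos hθ.1 (hpos x hx)).trans_le (hlower x hx)).trans
      (integral_rpow_neg_half_le_of_mul_le hpq hW (hW.sub (continuousOn_const.mul hψ)) hpos hθ.1
        hlower)
  have hlim : Tendsto (fun θ : ℝ ↦ θ ^ (-(1 / 2) : ℝ) * ∫ x in p..q, W x ^ (-(1 / 2) : ℝ))
      (𝓝[<] 1) (𝓝 (∫ x in p..q, W x ^ (-(1 / 2) : ℝ))) := by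
    have := (continuousAt_rpow_const 1 (-(1 / 2)) (.inl one_ne_zero)).tendsto.mul_const
      (∫ x in p..q, W x ^ (-(1 / 2) : ℝ))
    rw [one_rpow, one_mul] at this
    exact this.mono_left nhdsWithin_le_nhds
  exact ge_of_tendsto hlim (eventually_of_mem (Ioo_mem_nhdsLT zero_lt_one) hscaled)

namespace BarrierAscent

/- Subtracting a small multiple of `ψ = (F b + 1 - x) x^(-1/3)`, for which `-ψ' > ψ / (3x)`, makes
the differential inequality for `W` strict. -/
theorem sub_le_integral (hF : BarrierAscent (brayRHS ε) F b)
    (hW : ∀ x ∈ Ioc 0 (F b), HasDerivAt W (W' x) x)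
    (hH : ∀ x ∈ Ioc 0 (F b), 2 * brayRHS ε x (W x) ≤ W' x) (hWb : W (F b) ≤ 0) {t₁ t₂ : ℝ}
    (ht₁ : 0 < t₁) (ht : t₁ < t₂) (ht₂ : t₂ < b) (hpos : ∀ x ∈ Icc (F t₁) (F t₂), 0 < W x) :
    t₂ - t₁ ≤ ∫ x in (F t₁)..(F t₂), W x ^ (-(1 / 2) : ℝ) := by
  have hFt := hF.apply_lt_apply ht₁ ht ht₂.le
  have hsub : Icc (F t₁) (F t₂) ⊆ Ioc 0 (F b) := fun x hx ↦
    ⟨(hF.pos t₁ ⟨ht₁, (ht.trans ht₂).le⟩).trans_le hx.1,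
      hx.2.trans (hF.apply_lt_apply (ht₁.trans ht) ht₂ le_rfl).le⟩
  set K := F b + 1
  have hψ {x : ℝ} (hx : 0 < x) : HasDerivAt (fun x ↦ (K - x) * x ^ (-(1 / 3) : ℝ))
      (-x ^ (-(1 / 3) : ℝ) - (K - x) * x ^ (-(1 / 3) : ℝ) / (3 * x)) x := by
    refine (((hasDerivAt_id' x).const_sub K).mul
      (hasDerivAt_rpow_const (.inl hx.ne'))).congr_deriv ?_
    rw [rpow_sub_one hx.ne']
    field_simp
    ring
  refine le_integral_of_forall_sub_mul (ψ := fun x ↦ (K - x) * x ^ (-(1 / 3) : ℝ)) hFt.le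
    (fun x hx ↦ (hW x (hsub hx)).continuousAt.continuousWithinAt)
    (fun x hx ↦ (hψ (hsub hx).1).continuousAt.continuousWithinAt) hpos fun η hη hpos' ↦ ?_
  refine hF.sub_le_integral_of_lt (fun x hx ↦ (hW x hx).sub ((hψ hx.1).const_mul η))
    (fun x hx ↦ ?_) ?_ ht₁ ht ht₂ hpos'
  · have hx₃ : 0 < x ^ (-(1 / 3) : ℝ) := rpow_pos_of_pos hx.1 _
    have hKx : 0 ≤ K - x := by linarith [hx.2]
    calc 2 * brayRHS ε x (W x - η * ((K - x) * x ^ (-(1 / 3) : ℝ)))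
        ≤ W' x + η * ((K - x) * x ^ (-(1 / 3) : ℝ)) / (3 * x) :=
          (two_mul_brayRHS_sub_le hx.1 (by positivity)).trans (add_le_add_left (hH x hx) _)
      _ < W' x - η * (-x ^ (-(1 / 3) : ℝ) - (K - x) * x ^ (-(1 / 3) : ℝ) / (3 * x)) := by
          rw [mul_div_assoc]
          nlinarith [mul_pos hη hx₃]
  · have hFb : 0 < F b := (hsub (right_mem_Icc.2 hFt.le)).1.trans_le
      (hsub (right_mem_Icc.2 hFt.le)).2
    have : 0 < η * F b ^ (-(1 / 3) : ℝ) := by positivity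
    change W (F b) - η * ((F b + 1 - F b) * F b ^ (-(1 / 3) : ℝ)) < 0
    rw [add_sub_cancel_left, one_mul]
    linarith

theorem le_integral (hF : BarrierAscent (brayRHS ε) F b)
    (hW : ∀ x ∈ Ioc 0 (F b), HasDerivAt W (W' x) x)
    (hH : ∀ x ∈ Ioc 0 (F b), 2 * brayRHS ε x (W x) ≤ W' x) (hWb : W (F b) ≤ 0) {t : ℝ}
    (ht : t ∈ Ioc 0 b) (hpos : ∀ x ∈ Ioo 0 (F t), 0 < W x)
    (hint : IntervalIntegrable (fun x ↦ W x ^ (-(1 / 2) : ℝ)) volume 0 (F t)) :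
    t ≤ ∫ x in 0..F t, W x ^ (-(1 / 2) : ℝ) := by
  refine le_of_forall_pos_le_add fun e he ↦ ?_
  obtain ⟨η, hη, hηlt⟩ := exists_between (lt_min (half_pos he) (half_pos ht.1))
  have hηe : η < e / 2 := hηlt.trans_le (min_le_left _ _)
  have hηt : η < t - η := by linarith [hηlt.trans_le (min_le_right _ _)]
  have htη : t - η < t := by linarith
  have hFη : 0 < F η := hF.pos η ⟨hη, by linarith [ht.2]⟩
  have hFηt : F η < F (t - η) := hF.apply_lt_apply hη hηt (htη.le.trans ht.2)
  have hFt : F (t - η) < F t := hF.apply_lt_apply (hη.trans hηt) htη ht.2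
  have hnonneg : 0 ≤ᵐ[volume.restrict (Ioc 0 (F t))] fun x ↦ W x ^ (-(1 / 2) : ℝ) := by
    rw [← restrict_Ioo_eq_restrict_Ioc]
    exact (ae_restrict_iff' measurableSet_Ioo).2
      (ae_of_all _ fun x hx ↦ rpow_nonneg (hpos x hx).le _)
  have hsub := hF.sub_le_integral hW hH hWb hη hηt (htη.trans_le ht.2) fun x hx ↦
    hpos x ⟨hFη.trans_le hx.1, hx.2.trans_lt hFt⟩
  linarith [integral_mono_interval hFη.le hFηt.le hFt.le hnonneg hint]

end BarrierAscent

end BrayInequality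

section ClimbTime

variable {R c x y : ℝ}

theorem exists_pow_three_eq (hx : 0 < x) : ∃ t > 0, t ^ 3 = x :=
  ⟨x ^ (1 / 3 : ℝ), rpow_pos_of_pos hx _, by
    rw [← rpow_natCast, ← rpow_mul hx.le]
    norm_num⟩

theorem pow_three_rpow {t : ℝ} (ht : 0 ≤ t) (a : ℝ) : (t ^ 3) ^ a = t ^ (3 * a) := by
  rw [← rpow_natCast, ← rpow_mul ht, Nat.cast_ofNat]

theorem pow_three_rpow_one_third {t : ℝ} (ht : 0 ≤ t) : (t ^ 3) ^ (1 / 3 : ℝ) = t := by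
  rw [pow_three_rpow ht]
  norm_num

theorem pow_three_rpow_two_thirds {t : ℝ} (ht : 0 ≤ t) : (t ^ 3) ^ (2 / 3 : ℝ) = t ^ 2 := by
  rw [pow_three_rpow ht]
  norm_num

theorem pow_three_rpow_neg_one_third {t : ℝ} (ht : 0 ≤ t) :
    (t ^ 3) ^ (-(1 / 3) : ℝ) = t⁻¹ := by
  rw [pow_three_rpow ht, ← rpow_neg_one]
  norm_num

theorem sq_rpow_three_halves {t : ℝ} (ht : 0 ≤ t) : (t ^ 2) ^ (3 / 2 : ℝ) = t ^ 3 := by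
  rw [← rpow_natCast, ← rpow_mul ht, ← rpow_natCast]
  norm_num

theorem rpow_two_thirds_lt_sq_iff (hR : 0 ≤ R) (hx : 0 ≤ x) :
    x ^ (2 / 3 : ℝ) < R ^ 2 ↔ x < R ^ 3 := by
  rw [← pow_three_rpow_two_thirds hR]
  exact rpow_lt_rpow_iff hx (by positivity) (by norm_num)

theorem hasDerivAt_const_mul_sub_rpow_two_thirds (c d : ℝ) (hx : x ≠ 0) :
    HasDerivAt (fun x ↦ c * (d - x ^ (2 / 3 : ℝ))) (-(2 / 3) * c * x ^ (-(1 / 3) : ℝ)) x := by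
  refine (((hasDerivAt_rpow_const (.inl hx)).const_sub d).const_mul c).congr_deriv ?_
  rw [show (2 / 3 - 1 : ℝ) = -(1 / 3) by norm_num]
  ring

/-- The primitive `∫₀ˣ (R² - u^(2/3))^(-1/2) du`, for `0 ≤ x ≤ R³`, in closed form (substitute
`u = v³`). Up to the factor `c^(-1/2)` it is the time which a function with
`F'² = c (R² - F^(2/3))` takes to climb from `0` to `x`. -/
noncomputable def climbTime (R x : ℝ) : ℝ :=
  3 / 2 * (R ^ 2 * arcsin (x ^ (1 / 3 : ℝ) / R) -
    x ^ (1 / 3 : ℝ) * √(R ^ 2 - (x ^ (1 / 3 : ℝ)) ^ 2))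

theorem climbTime_zero (R : ℝ) : climbTime R 0 = 0 := by
  simp [climbTime]

theorem climbTime_pow_three (hR : 0 < R) : climbTime R (R ^ 3) = 3 * π / 4 * R ^ 2 := by
  rw [climbTime, pow_three_rpow_one_third hR.le, div_self hR.ne', arcsin_one, sub_self, sqrt_zero]
  ring

@[fun_prop]
theorem continuous_climbTime (R : ℝ) : Continuous (climbTime R) := by
  have : Continuous fun x : ℝ ↦ x ^ (1 / 3 : ℝ) := continuous_rpow_const (by norm_num)
  unfold climbTime
  fun_prop

theorem hasDerivAt_sq_mul_arcsin_sub {v : ℝ} (hR : 0 < R) (hv : v ∈ Ioo (-R) R) :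
    HasDerivAt (fun v ↦ R ^ 2 * arcsin (v / R) - v * √(R ^ 2 - v ^ 2))
      (2 * v ^ 2 / √(R ^ 2 - v ^ 2)) v := by
  have hpos : 0 < R ^ 2 - v ^ 2 := sub_pos.2 (sq_lt_sq.2 (by
    rw [abs_of_pos hR]
    exact abs_lt.2 hv))
  have hsqrt : √(1 - (v / R) ^ 2) = √(R ^ 2 - v ^ 2) / R := by
    rw [show 1 - (v / R) ^ 2 = (R ^ 2 - v ^ 2) / R ^ 2 by field_simp, sqrt_div hpos.le,
      sqrt_sq hR.le]
  have := sqrt_pos.2 hpos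
  have harcsin := (hasDerivAt_arcsin (x := v / R) (by
    rw [ne_eq, div_eq_iff hR.ne', neg_one_mul]
    exact hv.1.ne') (by
    rw [ne_eq, div_eq_iff hR.ne', one_mul]
    exact hv.2.ne)).comp v ((hasDerivAt_id' v).div_const R)
  have hroot := (((hasDerivAt_pow 2 v).const_sub (R ^ 2)).sqrt hpos.ne')
  refine ((harcsin.const_mul (R ^ 2)).sub ((hasDerivAt_id' v).mul hroot)).congr_deriv ?_
  rw [hsqrt]
  field_simp
  rw [sq_sqrt hpos.le]
  push_cast
  ring

theorem hasDerivAt_climbTime (hR : 0 < R) (hx : x ∈ Ioo 0 (R ^ 3)) :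
    HasDerivAt (climbTime R) ((R ^ 2 - x ^ (2 / 3 : ℝ)) ^ (-(1 / 2) : ℝ)) x := by
  obtain ⟨v, hv, rfl⟩ := exists_pow_three_eq hx.1
  have hvR : v < R := lt_of_pow_lt_pow_left₀ 3 hR.le hx.2
  have hpos : 0 < R ^ 2 - v ^ 2 := sub_pos.2 (pow_lt_pow_left₀ hvR hv.le two_ne_zero)
  have hroot : HasDerivAt (fun x : ℝ ↦ x ^ (1 / 3 : ℝ)) (1 / (3 * v ^ 2)) (v ^ 3) := by
    refine (hasDerivAt_rpow_const (.inl hx.1.ne')).congr_deriv ?_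
    rw [rpow_sub_one hx.1.ne', pow_three_rpow_one_third hv.le]
    field_simp
  have hG := hasDerivAt_sq_mul_arcsin_sub (v := (v ^ 3) ^ (1 / 3 : ℝ)) hR (by
    rw [pow_three_rpow_one_third hv.le]
    exact ⟨by linarith, hvR⟩)
  refine ((hG.comp (v ^ 3) hroot).const_mul (3 / 2)).congr_deriv ?_
  rw [pow_three_rpow_one_third hv.le, pow_three_rpow_two_thirds hv.le, rpow_neg_half hpos.le]
  have := sqrt_pos.2 hpos
  field_simp

theorem strictMonoOn_climbTime (hR : 0 < R) : StrictMonoOn (climbTime R) (Icc 0 (R ^ 3)) := by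
  refine strictMonoOn_of_hasDerivWithinAt_pos (convex_Icc _ _) (by fun_prop)
    (f' := fun x ↦ (R ^ 2 - x ^ (2 / 3 : ℝ)) ^ (-(1 / 2) : ℝ)) ?_ ?_ <;> rw [interior_Icc]
  · exact fun x hx ↦ (hasDerivAt_climbTime hR hx).hasDerivWithinAt
  · exact fun x hx ↦ rpow_pos_of_pos
      (sub_pos.2 ((rpow_two_thirds_lt_sq_iff hR.le hx.1.le).2 hx.2)) _

theorem hasDerivAt_inv_sqrt_mul_climbTime (hR : 0 < R) (hc : 0 ≤ c) (hx : x ∈ Ioo 0 (R ^ 3)) :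
    HasDerivAt (fun x ↦ (√c)⁻¹ * climbTime R x)
      ((c * (R ^ 2 - x ^ (2 / 3 : ℝ))) ^ (-(1 / 2) : ℝ)) x := by
  rw [mul_rpow hc (sub_pos.2 ((rpow_two_thirds_lt_sq_iff hR.le hx.1.le).2 hx.2)).le,
    rpow_neg_half hc]
  exact (hasDerivAt_climbTime hR hx).const_mul _

theorem intervalIntegrable_const_mul_sub_rpow (hR : 0 < R) (hc : 0 ≤ c) (hy : y ∈ Icc 0 (R ^ 3)) :
    IntervalIntegrable (fun x ↦ (c * (R ^ 2 - x ^ (2 / 3 : ℝ))) ^ (-(1 / 2) : ℝ)) volume 0 y := by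
  refine intervalIntegrable_deriv_of_nonneg (g := fun x ↦ (√c)⁻¹ * climbTime R x)
    (by fun_prop) ?_ ?_ <;> rw [min_eq_left hy.1, max_eq_right hy.1]
  · exact fun x hx ↦ hasDerivAt_inv_sqrt_mul_climbTime hR hc ⟨hx.1, hx.2.trans_le hy.2⟩
  · exact fun x hx ↦ rpow_nonneg (mul_nonneg hc (sub_pos.2 ((rpow_two_thirds_lt_sq_iff hR.le
      hx.1.le).2 (hx.2.trans_le hy.2))).le) _

theorem integral_const_mul_sub_rpow (hR : 0 < R) (hc : 0 ≤ c) (hy : y ∈ Icc 0 (R ^ 3)) :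
    ∫ x in 0..y, (c * (R ^ 2 - x ^ (2 / 3 : ℝ))) ^ (-(1 / 2) : ℝ) = (√c)⁻¹ * climbTime R y := by
  rw [integral_eq_sub_of_hasDerivAt_of_le (f := fun x ↦ (√c)⁻¹ * climbTime R x) hy.1 (by fun_prop)
    (fun x hx ↦ hasDerivAt_inv_sqrt_mul_climbTime hR hc ⟨hx.1, hx.2.trans_le hy.2⟩)
    (intervalIntegrable_const_mul_sub_rpow hR hc hy), climbTime_zero, mul_zero, sub_zero]

theorem BarrierAscent.le_climbTime {F : ℝ → ℝ} {ε b t : ℝ} (hF : BarrierAscent (brayRHS ε) F b)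
    (hR : 0 < R) (hc : 0 < c) (hRb : R ^ 3 ≤ F b)
    (hH : ∀ x > 0, 2 * brayRHS ε x (c * (R ^ 2 - x ^ (2 / 3 : ℝ))) ≤
      -(2 / 3) * c * x ^ (-(1 / 3) : ℝ))
    (ht : t ∈ Ioc 0 b) (htR : F t ≤ R ^ 3) : t ≤ (√c)⁻¹ * climbTime R (F t) := by
  have hFt := hF.pos t ht
  rw [← integral_const_mul_sub_rpow hR hc.le ⟨hFt.le, htR⟩]
  refine hF.le_integral
    (fun x hx ↦ hasDerivAt_const_mul_sub_rpow_two_thirds c _ hx.1.ne') (fun x hx ↦ hH x hx.1) ?_ ht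
    (fun x hx ↦ ?_) (intervalIntegrable_const_mul_sub_rpow hR hc.le ⟨hFt.le, htR⟩)
  · have hFb : 0 ≤ F b := (pow_pos hR 3).le.trans hRb
    have := not_lt.1 (mt (rpow_two_thirds_lt_sq_iff hR.le hFb).1 hRb.not_gt)
    exact mul_nonpos_of_nonneg_of_nonpos hc.le (sub_nonpos.2 this)
  · exact mul_pos hc (sub_pos.2 ((rpow_two_thirds_lt_sq_iff hR.le hx.1.le).2
      (hx.2.trans_le htR)))

end ClimbTime

section StarCondition

theorem hasDerivAt_ite_le {f g f' g' : ℝ → ℝ} {x y : ℝ} (hf : x ≤ y → HasDerivAt f (f' x) x)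
    (hg : y ≤ x → HasDerivAt g (g' x) x) (h : f y = g y) (h' : f' y = g' y) :
    HasDerivAt (fun x ↦ if x ≤ y then f x else g x) (if x ≤ y then f' x else g' x) x := by
  rcases lt_trichotomy x y with hxy | rfl | hxy
  · rw [if_pos hxy.le]
    refine (hf hxy.le).congr_of_eventuallyEq ?_
    filter_upwards [Iio_mem_nhds hxy] with z hz using if_pos (le_of_lt hz)
  · rw [if_pos le_rfl, ← hasDerivWithinAt_univ, ← Iic_union_Ici (a := x)]
    refine HasDerivWithinAt.union ?_ ?_
    · exact (hf le_rfl).hasDerivWithinAt.congr (fun z hz ↦ if_pos hz) (if_pos le_rfl)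
    · rw [h']
      refine (hg le_rfl).hasDerivWithinAt.congr (fun z hz ↦ ?_) ((if_pos le_rfl).trans h)
      rcases (mem_Ici.1 hz).eq_or_lt with rfl | hz
      · exact (if_pos le_rfl).trans h
      · exact if_neg hz.not_ge
  · rw [if_neg hxy.not_ge]
    refine (hg hxy.le).congr_of_eventuallyEq ?_
    filter_upwards [Ioi_mem_nhds hxy] with z hz using if_neg (not_le.2 hz)

/- The difference quotient `V x / (M - x)` extends to a positive continuous function, so that
`V x ≥ κ (M - x)` for some `κ > 0`. -/
theorem intervalIntegrable_rpow_neg_half_of_hasDerivAt_neg {V : ℝ → ℝ} {p M V'M : ℝ} (hpM : p ≤ M)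
    (hV : Continuous V) (hpos : ∀ x ∈ Ico p M, 0 < V x) (hVM : V M = 0)
    (hderiv : HasDerivAt V V'M M) (hneg : V'M < 0) :
    IntervalIntegrable (fun x ↦ V x ^ (-(1 / 2) : ℝ)) volume p M := by
  have hslope : ∀ x ∈ Icc p M, 0 < -dslope V M x := fun x hx ↦ by
    rcases hx.2.eq_or_lt with rfl | hxM
    · rwa [dslope_same, hderiv.deriv, neg_pos]
    · rw [dslope_of_ne _ hxM.ne, slope_def_field, hVM, sub_zero, neg_pos]
      exact div_neg_of_pos_of_neg (hpos x ⟨hx.1, hxM⟩) (sub_neg.2 hxM)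
  have hcont : ContinuousOn (fun x ↦ -dslope V M x) (Icc p M) :=
    (((continuousOn_dslope univ_mem).2 ⟨hV.continuousOn, hderiv.differentiableAt⟩).neg).mono
      (subset_univ _)
  obtain ⟨m, hm, hmin⟩ := isCompact_Icc.exists_isMinOn (nonempty_Icc.2 hpM) hcont
  set κ := -dslope V M m
  have hκ : 0 < κ := hslope m hm
  have hlower : ∀ x ∈ Icc p M, κ * (M - x) ≤ V x := fun x hx ↦ by
    have hκx : κ * (M - x) ≤ -dslope V M x * (M - x) :=
      mul_le_mul_of_nonneg_right (hmin hx) (sub_nonneg.2 hx.2)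
    have hdslope := sub_smul_dslope V M x
    rw [hVM, smul_eq_mul] at hdslope
    linarith
  have hbound : IntervalIntegrable (fun x ↦ κ ^ (-(1 / 2) : ℝ) * (M - x) ^ (-(1 / 2) : ℝ))
      volume p M := by
    have := (intervalIntegrable_rpow' (r := -(1 / 2)) (a := M - p) (b := 0)
      (by norm_num)).comp_sub_left M
    rw [sub_sub_cancel, sub_zero] at this
    exact this.const_mul _
  refine hbound.mono_fun' (hV.measurable.pow_const _).aestronglyMeasurable ?_
  rw [uIoc_of_le hpM, ← restrict_Ioo_eq_restrict_Ioc]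
  refine (ae_restrict_iff' measurableSet_Ioo).2 (ae_of_all _ fun x hx ↦ ?_)
  have hMx : 0 < M - x := sub_pos.2 hx.2
  simp only
  rw [norm_of_nonneg (rpow_nonneg (hpos x (Ioo_subset_Ico_self hx)).le _),
    ← mul_rpow hκ.le hMx.le]
  exact rpow_le_rpow_of_nonpos (mul_pos hκ hMx) (hlower x (Ioo_subset_Icc_self hx)) (by norm_num)

variable {ε Z τ R x y : ℝ}

theorem CondStar.climbTime_lt (hstar : CondStar ε) (hε : 0 < ε) (hε' : ε < 1) (hZ : 0 < Z)
    (hZε : (3 - 2 * ε) * Z ^ 2 = 4 * π) : (√(9 * ε))⁻¹ * climbTime Z (Z ^ 3) < π ^ 2 := by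
  have hε₃ : 0 < 3 - 2 * ε := by linarith
  have hmem : Z ^ 2 ∈ Ico (4 * π / (3 - 2 * ε)) (4 * π) :=
    ⟨(div_le_iff₀' hε₃).2 hZε.ge, by nlinarith [pow_pos hZ 2]⟩
  have h := hstar (Z ^ 3) (Z ^ 2) hmem (by
    rw [← sqrt_eq_rpow, sqrt_sq hZ.le, ← hZε]
    ring)
  rw [sq_rpow_three_halves hZ.le, integral_same, add_zero, pow_three_rpow_two_thirds hZ.le] at h
  rw [← integral_const_mul_sub_rpow hZ (by positivity) ⟨by positivity, le_rfl⟩]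
  convert h using 5 with x
  linear_combination 9 * hZε

theorem BarrierAscent.lt_pi_sq_of_le {F : ℝ → ℝ} {b : ℝ} (hF : BarrierAscent (brayRHS ε) F b)
    (hb : 0 < b) (hε : 0 < ε) (hε' : ε < 1) (hstar : CondStar ε) (hZ : 0 < Z)
    (hZε : (3 - 2 * ε) * Z ^ 2 = 4 * π) (hFb : F b ≤ Z ^ 3) : b < π ^ 2 := by
  obtain ⟨R, hR, hRb⟩ := exists_pow_three_eq (hF.pos b ⟨hb, le_rfl⟩)
  have hRZ : R ≤ Z := le_of_pow_le_pow_left₀ three_ne_zero hZ.le (hRb.trans_le hFb)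
  calc b ≤ (√(9 * ε))⁻¹ * climbTime R (F b) :=
        hF.le_climbTime hR (by positivity) hRb.le
          (fun x _ ↦ by linarith [brayRHS_le_right ε x (9 * ε * (R ^ 2 - x ^ (2 / 3 : ℝ)))])
          ⟨hb, le_rfl⟩ hRb.ge
    _ ≤ (√(9 * ε))⁻¹ * climbTime Z (Z ^ 3) := by
        rw [← hRb, climbTime_pow_three hR, climbTime_pow_three hZ]
        gcongr
    _ < π ^ 2 := hstar.climbTime_lt hε hε' hZ hZε

/-- The profile in condition (★): up to `x = y` it solves `V' = 2 H(x, V)` with the second term of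
the minimum `H` active, from `x = y` on with the first one. -/
noncomputable def starProfile (ε y x : ℝ) : ℝ :=
  if x ≤ y then 36 * π - 27 * (1 - ε) * y ^ (2 / 3 : ℝ) - 9 * ε * x ^ (2 / 3 : ℝ)
  else 36 * π - 18 * (1 - ε) * y * x ^ (-(1 / 3) : ℝ) - 9 * x ^ (2 / 3 : ℝ)

theorem mul_rpow_neg_one_third (hy : 0 < y) : y * y ^ (-(1 / 3) : ℝ) = y ^ (2 / 3 : ℝ) := by
  rw [mul_comm, ← rpow_add_one hy.ne']
  norm_num

theorem starProfile_eq_of_le (hy : 0 < y) (hyx : y ≤ x) : starProfile ε y x =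
    36 * π - 18 * (1 - ε) * y * x ^ (-(1 / 3) : ℝ) - 9 * x ^ (2 / 3 : ℝ) := by
  rcases hyx.eq_or_lt with rfl | hyx
  · rw [starProfile, if_pos le_rfl]
    linear_combination 18 * (1 - ε) * mul_rpow_neg_one_third hy
  · exact if_neg hyx.not_ge

theorem continuous_starProfile (hy : 0 < y) : Continuous (starProfile ε y) := by
  have hroot : Continuous fun x : ℝ ↦ x ^ (2 / 3 : ℝ) := continuous_rpow_const (by norm_num)
  refine continuous_if_le continuous_id continuous_const (by fun_prop) ?_ ?_
  · refine (continuousOn_const.sub (continuousOn_const.mul ?_)).sub (by fun_prop)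
    exact continuousOn_id.rpow_const fun x hx ↦ .inl (hy.trans_le hx).ne'
  · rintro x rfl
    linear_combination 18 * (1 - ε) * mul_rpow_neg_one_third hy

theorem hasDerivAt_starProfile (hy : 0 < y) (hx : 0 < x) :
    HasDerivAt (starProfile ε y) (if x ≤ y then -6 * ε * x ^ (-(1 / 3) : ℝ)
      else 6 * (1 - ε) * y * x ^ (-(1 / 3) : ℝ) / x - 6 * x ^ (-(1 / 3) : ℝ)) x := by
  have hroot : HasDerivAt (fun x : ℝ ↦ x ^ (2 / 3 : ℝ)) (2 / 3 * x ^ (-(1 / 3) : ℝ)) x := by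
    refine (hasDerivAt_rpow_const (.inl hx.ne')).congr_deriv ?_
    norm_num
  have hinv : HasDerivAt (fun x : ℝ ↦ x ^ (-(1 / 3) : ℝ)) (-(1 / 3) * (x ^ (-(1 / 3) : ℝ) / x)) x :=
    (hasDerivAt_rpow_const (.inl hx.ne')).congr_deriv (by rw [rpow_sub_one hx.ne'])
  refine hasDerivAt_ite_le (f' := fun x ↦ -6 * ε * x ^ (-(1 / 3) : ℝ))
    (g' := fun x ↦ 6 * (1 - ε) * y * x ^ (-(1 / 3) : ℝ) / x - 6 * x ^ (-(1 / 3) : ℝ))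
    (fun _ ↦ ?_) (fun _ ↦ ?_) ?_ ?_
  · exact ((hroot.const_mul (9 * ε)).const_sub _).congr_deriv (by ring)
  · exact (((hinv.const_mul (18 * (1 - ε) * y)).const_sub _).sub
      (hroot.const_mul 9)).congr_deriv (by ring)
  · linear_combination 18 * (1 - ε) * mul_rpow_neg_one_third hy
  · field_simp
    ring

theorem two_mul_brayRHS_starProfile_le (hx : 0 < x) :
    2 * brayRHS ε x (starProfile ε y x) ≤ if x ≤ y then -6 * ε * x ^ (-(1 / 3) : ℝ)
      else 6 * (1 - ε) * y * x ^ (-(1 / 3) : ℝ) / x - 6 * x ^ (-(1 / 3) : ℝ) := by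
  split_ifs with hxy
  · linarith [brayRHS_le_right ε x (starProfile ε y x)]
  · have hleft := brayRHS_le_left ε x (starProfile ε y x)
    rw [starProfile, if_neg hxy, ← mul_rpow_neg_one_third hx] at hleft ⊢
    refine (mul_le_mul_of_nonneg_left hleft two_pos.le).trans_eq ?_
    field_simp
    ring

/- The map `t ↦ t (4π - t²)` takes the value `2(1 - ε)Z³` at `Z` and decreases on `[Z, ∞)`. -/
theorem lt_of_two_mul_pow_three_eq (hε : 0 < ε) (hZ : 0 < Z) (hZε : (3 - 2 * ε) * Z ^ 2 = 4 * π)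
    (hε' : ε < 1) (hZR : Z < R) (hτR : 2 * (1 - ε) * τ ^ 3 = R * (4 * π - R ^ 2)) : τ < Z := by
  have hslope : 0 < R ^ 2 + R * Z + Z ^ 2 - 4 * π := by nlinarith [mul_pos hε (pow_pos hZ 2)]
  have hlt : 2 * (1 - ε) * τ ^ 3 < 2 * (1 - ε) * Z ^ 3 := by
    have := mul_pos (sub_pos.2 hZR) hslope
    linear_combination this + hτR - Z * hZε
  exact lt_of_pow_lt_pow_left₀ 3 hZ.le (lt_of_mul_lt_mul_left hlt (by linarith))

theorem mul_starProfile_pow_three {t : ℝ} (hτ : 0 < τ) (hτt : τ ≤ t)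
    (hτR : 2 * (1 - ε) * τ ^ 3 = R * (4 * π - R ^ 2)) :
    t * starProfile ε (τ ^ 3) (t ^ 3) = (R - t) * (9 * (t ^ 2 + t * R + R ^ 2) - 36 * π) := by
  have ht := hτ.trans_le hτt
  rw [starProfile_eq_of_le (pow_pos hτ 3) (pow_le_pow_left₀ hτ.le hτt 3),
    pow_three_rpow_two_thirds ht.le, pow_three_rpow_neg_one_third ht.le]
  field_simp
  linear_combination -9 * hτR

theorem starProfile_pow_three (hτ : 0 < τ) (hτR' : τ < R)
    (hτR : 2 * (1 - ε) * τ ^ 3 = R * (4 * π - R ^ 2)) : starProfile ε (τ ^ 3) (R ^ 3) = 0 := by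
  have := mul_starProfile_pow_three hτ hτR'.le hτR
  rw [sub_self, zero_mul] at this
  exact (mul_eq_zero.1 this).resolve_left (hτ.trans hτR').ne'

theorem starProfile_pos (hε : 0 < ε) (hε' : ε < 1) (hτ : 0 < τ) (hZ : 0 < Z)
    (hZε : (3 - 2 * ε) * Z ^ 2 = 4 * π) (hZR : Z < R)
    (hτR : 2 * (1 - ε) * τ ^ 3 = R * (4 * π - R ^ 2)) (hx : x ∈ Ico 0 (R ^ 3)) :
    0 < starProfile ε (τ ^ 3) x := by
  have hτZ := lt_of_two_mul_pow_three_eq hε hZ hZε hε' hZR hτR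
  have hτ₃ : 0 < τ ^ 3 := pow_pos hτ 3
  have hle : ∀ u ≤ τ ^ 3, 0 ≤ u → 0 < starProfile ε (τ ^ 3) u := fun u hu hu₀ ↦ by
    have hroot : u ^ (2 / 3 : ℝ) ≤ τ ^ 2 := by
      rw [← pow_three_rpow_two_thirds hτ.le]
      exact rpow_le_rpow hu₀ hu (by norm_num)
    have hgap : 0 < (3 - 2 * ε) * (Z ^ 2 - τ ^ 2) :=
      mul_pos (by linarith) (sub_pos.2 (pow_lt_pow_left₀ hτZ hτ.le two_ne_zero))
    rw [starProfile, if_pos hu, pow_three_rpow_two_thirds hτ.le]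
    nlinarith [mul_le_mul_of_nonneg_left hroot hε.le]
  rcases le_total x (τ ^ 3) with hxτ | hxτ
  · exact hle x hxτ hx.1
  obtain ⟨t, ht, rfl⟩ := exists_pow_three_eq (hτ₃.trans_le hxτ)
  have hτt : τ ≤ t := le_of_pow_le_pow_left₀ three_ne_zero ht.le hxτ
  have htR : t < R := lt_of_pow_lt_pow_left₀ 3 (hZ.trans hZR).le hx.2
  have hτbracket : 0 < 9 * (τ ^ 2 + τ * R + R ^ 2) - 36 * π :=
    pos_of_mul_pos_right (mul_starProfile_pow_three hτ le_rfl hτR ▸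
      mul_pos hτ (hle _ le_rfl hτ₃.le)) (sub_nonneg.2 (hτZ.trans hZR).le)
  have htbracket : 0 < 9 * (t ^ 2 + t * R + R ^ 2) - 36 * π := by
    nlinarith [mul_nonneg (sub_nonneg.2 hτt) (hτ.le.trans hτt), hZ.trans hZR]
  exact pos_of_mul_pos_right (mul_starProfile_pow_three hτ hτt hτR ▸
    mul_pos (sub_pos.2 htR) htbracket) ht.le

theorem intervalIntegrable_starProfile_rpow (hε : 0 < ε) (hε' : ε < 1) (hτ : 0 < τ) (hZ : 0 < Z)
    (hZε : (3 - 2 * ε) * Z ^ 2 = 4 * π) (hZR : Z < R)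
    (hτR : 2 * (1 - ε) * τ ^ 3 = R * (4 * π - R ^ 2)) :
    IntervalIntegrable (fun x ↦ starProfile ε (τ ^ 3) x ^ (-(1 / 2) : ℝ)) volume 0 (R ^ 3) := by
  have hR := hZ.trans hZR
  have hτR' : τ < R := (lt_of_two_mul_pow_three_eq hε hZ hZε hε' hZR hτR).trans hZR
  have hτ₃R : τ ^ 3 < R ^ 3 := pow_lt_pow_left₀ hτR' hτ.le three_ne_zero
  refine intervalIntegrable_rpow_neg_half_of_hasDerivAt_neg (by positivity)
    (continuous_starProfile (by positivity))
    (fun x hx ↦ starProfile_pos hε hε' hτ hZ hZε hZR hτR hx) (starProfile_pow_three hτ hτR' hτR)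
    (hasDerivAt_starProfile (by positivity) (by positivity)) ?_
  rw [if_neg hτ₃R.not_ge, pow_three_rpow_neg_one_third hR.le]
  have hvalue : 6 * (1 - ε) * τ ^ 3 * R⁻¹ / R ^ 3 - 6 * R⁻¹ = (12 * π - 9 * R ^ 2) / R ^ 3 := by
    field_simp
    linear_combination 3 * hτR
  rw [hvalue]
  exact div_neg_of_neg_of_pos
    (by nlinarith [pow_lt_pow_left₀ hZR hZ.le two_ne_zero, mul_pos hε (pow_pos hZ 2)])
    (by positivity)

theorem CondStar.integral_starProfile_lt (hstar : CondStar ε) (hε : 0 < ε) (hε' : ε < 1)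
    (hτ : 0 < τ) (hZ : 0 < Z) (hZε : (3 - 2 * ε) * Z ^ 2 = 4 * π) (hZR : Z < R)
    (hRπ : R ^ 2 < 4 * π) (hτR : 2 * (1 - ε) * τ ^ 3 = R * (4 * π - R ^ 2)) :
    ∫ x in 0..R ^ 3, starProfile ε (τ ^ 3) x ^ (-(1 / 2) : ℝ) < π ^ 2 := by
  have hR := hZ.trans hZR
  have hτ₃ : 0 < τ ^ 3 := pow_pos hτ 3
  have hτ₃R : τ ^ 3 ≤ R ^ 3 := pow_le_pow_left₀ hτ.le
    ((lt_of_two_mul_pow_three_eq hε hZ hZε hε' hZR hτR).trans hZR).le 3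
  have hint := intervalIntegrable_starProfile_rpow hε hε' hτ hZ hZε hZR hτR
  have hmem : τ ^ 3 ∈ uIcc 0 (R ^ 3) := mem_uIcc_of_le hτ₃.le hτ₃R
  have h := hstar (τ ^ 3) (R ^ 2)
    ⟨(div_le_iff₀' (by linarith)).2 (hZε.ge.trans (by gcongr; linarith)), hRπ⟩
    (by rwa [← sqrt_eq_rpow, sqrt_sq hR.le])
  rw [sq_rpow_three_halves hR.le] at h
  rw [← integral_add_adjacent_intervals (hint.mono_set (uIcc_subset_uIcc_left hmem))
    (hint.mono_set (uIcc_subset_uIcc_right hmem))]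
  refine (congrArg₂ (· + ·) (integral_congr fun x hx ↦ ?_)
    (integral_congr fun x hx ↦ ?_)).trans_lt h
  · rw [uIcc_of_le hτ₃.le] at hx
    exact congrArg (· ^ _) (if_pos hx.2)
  · rw [uIcc_of_le hτ₃R] at hx
    exact congrArg (· ^ _) (starProfile_eq_of_le hτ₃ hx.1)

theorem BarrierAscent.lt_pi_sq_of_gt {F : ℝ → ℝ} {b : ℝ} (hF : BarrierAscent (brayRHS ε) F b)
    (hb : 0 < b) (hε : 0 < ε) (hε' : ε < 1) (hstar : CondStar ε) (hZ : 0 < Z)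
    (hZε : (3 - 2 * ε) * Z ^ 2 = 4 * π) (hZR : Z < R) (hRπ : R ^ 2 < 4 * π) (hFb : F b = R ^ 3) :
    b < π ^ 2 := by
  have hR := hZ.trans hZR
  have hε₁ : 0 < 2 * (1 - ε) := by linarith
  obtain ⟨τ, hτ, hτ₃⟩ := exists_pow_three_eq (div_pos (mul_pos hR (sub_pos.2 hRπ)) hε₁)
  have hτR : 2 * (1 - ε) * τ ^ 3 = R * (4 * π - R ^ 2) := by
    rw [hτ₃, mul_div_cancel₀ _ hε₁.ne']
  have hτR' : τ < R := (lt_of_two_mul_pow_three_eq hε hZ hZε hε' hZR hτR).trans hZR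
  refine lt_of_le_of_lt ?_ (hstar.integral_starProfile_lt hε hε' hτ hZ hZε hZR hRπ hτR)
  rw [← hFb]
  refine hF.le_integral (fun x hx ↦ hasDerivAt_starProfile (pow_pos hτ 3) hx.1)
    (fun x hx ↦ two_mul_brayRHS_starProfile_le hx.1) ?_ ⟨hb, le_rfl⟩ ?_ ?_ <;> rw [hFb]
  · exact (starProfile_pow_three hτ hτR' hτR).le
  · exact fun x hx ↦ starProfile_pos hε hε' hτ hZ hZε hZR hτR (Ioo_subset_Ico_self hx)
  · exact intervalIntegrable_starProfile_rpow hε hε' hτ hZ hZε hZR hτR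

theorem BarrierAscent.lt_pi_sq {F : ℝ → ℝ} {b : ℝ} (hF : BarrierAscent (brayRHS ε) F b)
    (hb : 0 < b) (hε : 0 < ε) (hε' : ε < 1) (hstar : CondStar ε)
    (hFb : F b < √(4 * π) ^ 3) : b < π ^ 2 := by
  have hε₃ : 0 < 3 - 2 * ε := by linarith
  have hZ : 0 < √(4 * π / (3 - 2 * ε)) := by positivity
  have hZε : (3 - 2 * ε) * √(4 * π / (3 - 2 * ε)) ^ 2 = 4 * π := by
    rw [sq_sqrt (by positivity), mul_div_cancel₀ _ hε₃.ne']
  rcases le_or_gt (F b) (√(4 * π / (3 - 2 * ε)) ^ 3) with hle | hgt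
  · exact hF.lt_pi_sq_of_le hb hε hε' hstar hZ hZε hle
  obtain ⟨R, hR, hRb⟩ := exists_pow_three_eq (hF.pos b ⟨hb, le_rfl⟩)
  rw [← hRb] at hgt hFb
  have hZR := lt_of_pow_lt_pow_left₀ 3 hR.le hgt
  have hRπ : R ^ 2 < 4 * π :=
    (lt_sqrt hR.le).1 (lt_of_pow_lt_pow_left₀ 3 (sqrt_nonneg _) hFb)
  exact hF.lt_pi_sq_of_gt hb hε hε' hstar hZ hZε hZR hRπ hRb.symm

end StarCondition

section ComparisonFunction

theorem inv_sqrt_mul_climbTime_sqrt :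
    (√9)⁻¹ * climbTime √(4 * π) (√(4 * π) ^ 3) = π ^ 2 := by
  rw [climbTime_pow_three (by positivity), sq_sqrt (by positivity),
    show (9 : ℝ) = 3 ^ 2 by norm_num, sqrt_sq (by norm_num)]
  ring

variable {f f' f'' : ℝ → ℝ} {ε L r : ℝ}

/-- Bray's mass function `x^(1/3) (36π - q) - 9x`, at `x = f` and `q = f'²`. It is nonpositive
exactly when `q ≥ 36π - 9x^(2/3)`, the squared speed in the round sphere. -/
noncomputable def brayMass (x q : ℝ) : ℝ :=
  x ^ (1 / 3 : ℝ) * (36 * π - q) - 9 * x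

theorem le_of_brayMass_nonpos {x q : ℝ} (hx : 0 < x) (h : brayMass x q ≤ 0) :
    9 * (√(4 * π) ^ 2 - x ^ (2 / 3 : ℝ)) ≤ q := by
  obtain ⟨t, ht, rfl⟩ := exists_pow_three_eq hx
  rw [brayMass, pow_three_rpow_one_third ht.le] at h
  rw [pow_three_rpow_two_thirds ht.le, sq_sqrt (by positivity)]
  have := nonpos_of_mul_nonpos_right (a := t) (b := 36 * π - q - 9 * t ^ 2) (by linarith) ht
  linarith

theorem brayMass_pow_three_zero : brayMass (√(4 * π) ^ 3) 0 = 0 := by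
  rw [brayMass, pow_three_rpow_one_third (sqrt_nonneg _), pow_succ, sq_sqrt (by positivity)]
  ring

theorem hasDerivAt_brayMass (hpos : 0 < f r) (hf : HasDerivAt f (f' r) r)
    (hf' : HasDerivAt f' (f'' r) r) : HasDerivAt (fun s ↦ brayMass (f s) (f' s ^ 2))
      (2 * f r ^ (1 / 3 : ℝ) * f' r *
        ((36 * π - f' r ^ 2) / (6 * f r) - 9 / 2 * f r ^ (-(1 / 3) : ℝ) - f'' r)) r := by
  have hroot := hf.rpow_const (p := 1 / 3) (.inl hpos.ne')
  have := rpow_pos_of_pos hpos (1 / 3)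
  refine ((hroot.mul ((hf'.pow 2).const_sub (36 * π))).sub (hf.const_mul 9)).congr_deriv ?_
  rw [rpow_sub_one hpos.ne', rpow_neg hpos.le]
  simp only [Pi.pow_apply]
  field_simp
  ring

theorem brayMass_nonpos (hr : r ≤ 0) (hpos : ∀ s ∈ Icc r 0, 0 < f s)
    (hf : ∀ s ∈ Icc r 0, HasDerivAt f (f' s) s) (hf' : ∀ s ∈ Icc r 0, HasDerivAt f' (f'' s) s)
    (hode : ∀ s ∈ Icc r 0, f'' s ≤ brayRHS ε (f s) (f' s ^ 2))
    (hf'_pos : ∀ s ∈ Ico r 0, 0 < f' s) (hf0 : f 0 = √(4 * π) ^ 3) (hf'0 : f' 0 = 0) :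
    brayMass (f r) (f' r ^ 2) ≤ 0 := by
  have hmass := fun s hs ↦ hasDerivAt_brayMass (hpos s hs) (hf s hs) (hf' s hs)
  have hmono : MonotoneOn (fun s ↦ brayMass (f s) (f' s ^ 2)) (Icc r 0) := by
    refine monotoneOn_of_hasDerivWithinAt_nonneg (convex_Icc r 0)
      (fun s hs ↦ (hmass s hs).continuousAt.continuousWithinAt)
      (fun s hs ↦ (hmass s (interior_subset hs)).hasDerivWithinAt) fun s hs ↦ ?_
    rw [interior_Icc] at hs
    have hs' := Ioo_subset_Icc_self hs
    exact mul_nonneg (mul_nonneg (mul_nonneg zero_le_two (rpow_nonneg (hpos s hs').le _))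
      (hf'_pos s (Ioo_subset_Ico_self hs)).le)
      (sub_nonneg.2 ((hode s hs').trans (brayRHS_le_left _ _ _)))
  refine (hmono (left_mem_Icc.2 hr) (right_mem_Icc.2 hr) hr).trans_eq ?_
  simp only [hf0, hf'0, zero_pow two_ne_zero, brayMass_pow_three_zero]

theorem deriv_pos_of_le_brayRHS (hε : 0 < ε) (hpos : ∀ s ∈ Icc r 0, 0 < f s)
    (hf' : ∀ s ∈ Icc r 0, HasDerivAt f' (f'' s) s)
    (hode : ∀ s ∈ Icc r 0, f'' s ≤ brayRHS ε (f s) (f' s ^ 2)) (hf'0 : f' 0 = 0) :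
    ∀ s ∈ Ico r 0, 0 < f' s := fun s hs ↦ by
  have hanti : StrictAntiOn f' (Icc r 0) :=
    strictAntiOn_of_hasDerivWithinAt_neg (convex_Icc r 0)
      (fun s hs ↦ (hf' s hs).continuousAt.continuousWithinAt)
      (fun s hs ↦ (hf' s (interior_subset hs)).hasDerivWithinAt)
      fun s hs ↦ (hode s (interior_subset hs)).trans_lt
        (brayRHS_neg hε _ (hpos s (interior_subset hs)))
  exact hf'0 ▸ hanti (Ico_subset_Icc_self hs) (right_mem_Icc.2 (hs.1.trans hs.2.le)) hs.2

/- By `brayMass_nonpos` the speed is at least `√(36π - 9 f^(2/3))`, so that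
`(√9)⁻¹ * climbTime √(4π) ∘ f` grows at least at unit speed, up to `π²` at time `0`. -/
theorem climbTime_le_add (hε : 0 < ε) (hr : r ≤ 0) (hpos : ∀ s ∈ Icc r 0, 0 < f s)
    (hf : ∀ s ∈ Icc r 0, HasDerivAt f (f' s) s) (hf' : ∀ s ∈ Icc r 0, HasDerivAt f' (f'' s) s)
    (hode : ∀ s ∈ Icc r 0, f'' s ≤ brayRHS ε (f s) (f' s ^ 2))
    (hf0 : f 0 = √(4 * π) ^ 3) (hf'0 : f' 0 = 0) :
    (√9)⁻¹ * climbTime √(4 * π) (f r) ≤ π ^ 2 + r := by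
  have h0 : (0 : ℝ) ∈ Icc r 0 := right_mem_Icc.2 hr
  have hR : 0 < √(4 * π) := by positivity
  have hf'_pos := deriv_pos_of_le_brayRHS hε hpos hf' hode hf'0
  have hcont : ContinuousOn f (Icc r 0) := fun s hs ↦ (hf s hs).continuousAt.continuousWithinAt
  have hmono : StrictMonoOn f (Icc r 0) :=
    strictMonoOn_of_hasDerivWithinAt_pos (convex_Icc r 0) hcont
      (fun s hs ↦ (hf s (interior_subset hs)).hasDerivWithinAt) fun s hs ↦
        hf'_pos s (Ioo_subset_Ico_self (interior_Icc (a := r) ▸ hs))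
  have hgap : ∀ s ∈ Ioo r 0, 0 < √(4 * π) ^ 2 - f s ^ (2 / 3 : ℝ) := fun s hs ↦
    sub_pos.2 ((rpow_two_thirds_lt_sq_iff hR.le (hpos s (Ioo_subset_Icc_self hs)).le).2
      (hf0 ▸ hmono (Ioo_subset_Icc_self hs) h0 hs.2))
  have hspeed : ∀ s ∈ Ioo r 0, √(9 * (√(4 * π) ^ 2 - f s ^ (2 / 3 : ℝ))) ≤ f' s := fun s hs ↦ by
    have hsub : Ico s 0 ⊆ Ico r 0 := Ico_subset_Ico_left hs.1.le
    have hsub' : Icc s 0 ⊆ Icc r 0 := Icc_subset_Icc_left hs.1.le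
    exact (sqrt_le_left (hf'_pos s (Ioo_subset_Ico_self hs)).le).2
      (le_of_brayMass_nonpos (hpos s (Ioo_subset_Icc_self hs)) (brayMass_nonpos hs.2.le
        (fun t ht ↦ hpos t (hsub' ht)) (fun t ht ↦ hf t (hsub' ht)) (fun t ht ↦ hf' t (hsub' ht))
        (fun t ht ↦ hode t (hsub' ht)) (fun t ht ↦ hf'_pos t (hsub ht)) hf0 hf'0))
  have htime : MonotoneOn (fun s ↦ (√9)⁻¹ * climbTime √(4 * π) (f s) - s) (Icc r 0) := by
    refine monotoneOn_of_hasDerivWithinAt_nonneg (convex_Icc r 0)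
      (f' := fun s ↦ (9 * (√(4 * π) ^ 2 - f s ^ (2 / 3 : ℝ))) ^ (-(1 / 2) : ℝ) * f' s - 1)
      (by fun_prop) ?_ ?_ <;> rw [interior_Icc] <;> intro s hs
    · have hs' := Ioo_subset_Icc_self hs
      exact (((hasDerivAt_inv_sqrt_mul_climbTime hR (by norm_num)
        ⟨hpos s hs', hf0 ▸ hmono hs' h0 hs.2⟩).comp s (hf s hs')).sub
          (hasDerivAt_id' s)).hasDerivWithinAt
    · have hW : 0 < 9 * (√(4 * π) ^ 2 - f s ^ (2 / 3 : ℝ)) := mul_pos (by norm_num) (hgap s hs)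
      rw [rpow_neg_half hW.le, sub_nonneg, ← div_eq_inv_mul, one_le_div (sqrt_pos.2 hW)]
      exact hspeed s hs
  have := htime (left_mem_Icc.2 hr) h0 hr
  simp only [hf0, inv_sqrt_mul_climbTime_sqrt, sub_zero] at this
  linarith

theorem hasDerivAt_deriv_of_contDiffOn {U : Set ℝ} {u : ℝ → ℝ} (hU : IsOpen U)
    (hu : ContDiffOn ℝ 2 u U) (hr : r ∈ U) : HasDerivAt u (deriv u r) r :=
  ((hu.contDiffAt (hU.mem_nhds hr)).differentiableAt two_ne_zero).hasDerivAt

theorem hasDerivAt_deriv_deriv_of_contDiffOn {U : Set ℝ} {u : ℝ → ℝ} (hU : IsOpen U)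
    (hu : ContDiffOn ℝ 2 u U) (hr : r ∈ U) : HasDerivAt (deriv u) (deriv (deriv u) r) r :=
  (((hu.deriv_of_isOpen hU (m := 1) (by norm_num)).contDiffAt
    (hU.mem_nhds hr)).differentiableAt one_ne_zero).hasDerivAt

theorem climbTime_le_sub_abs (hε : 0 < ε) (hf : ContDiffOn ℝ 2 f (Ioo (-L) L))
    (hpos : ∀ s ∈ Ioo (-L) L, 0 < f s)
    (hode : ∀ s ∈ Ioo (-L) L, deriv (deriv f) s ≤ brayRHS ε (f s) (deriv f s ^ 2))
    (hf0 : f 0 = √(4 * π) ^ 3) (hf'0 : deriv f 0 = 0) (hr : r ∈ Ioo (-L) L) :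
    (√9)⁻¹ * climbTime √(4 * π) (f r) ≤ π ^ 2 - |r| := by
  have hderiv := fun s hs ↦ hasDerivAt_deriv_of_contDiffOn (r := s) isOpen_Ioo hf hs
  have hderiv₂ := fun s hs ↦ hasDerivAt_deriv_deriv_of_contDiffOn (r := s) isOpen_Ioo hf hs
  rcases le_total r 0 with hr0 | hr0
  · have hsub : Icc r 0 ⊆ Ioo (-L) L := fun s hs ↦
      ⟨hr.1.trans_le hs.1, hs.2.trans_lt (by linarith [hr.1, hr.2])⟩
    rw [abs_of_nonpos hr0, sub_neg_eq_add]
    exact climbTime_le_add hε hr0 (fun s hs ↦ hpos s (hsub hs)) (fun s hs ↦ hderiv s (hsub hs))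
      (fun s hs ↦ hderiv₂ s (hsub hs)) (fun s hs ↦ hode s (hsub hs)) hf0 hf'0
  · have hsub : ∀ s ∈ Icc (-r) 0, -s ∈ Ioo (-L) L := fun s hs ↦
      ⟨by linarith [hr.1, hr.2, hs.2], by linarith [hr.2, hs.1]⟩
    have := climbTime_le_add (f := fun s ↦ f (-s)) (f' := fun s ↦ -deriv f (-s))
      (f'' := fun s ↦ deriv (deriv f) (-s)) hε (neg_nonpos.2 hr0) (fun s hs ↦ hpos _ (hsub s hs))
      (fun s hs ↦ by
        simpa [Function.comp_def] using (hderiv _ (hsub s hs)).comp s (hasDerivAt_neg s))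
      (fun s hs ↦ by
        simpa using ((hderiv₂ _ (hsub s hs)).comp s (hasDerivAt_neg s)).fun_neg)
      (fun s hs ↦ by simpa using hode _ (hsub s hs)) (by simpa using hf0) (by simpa using hf'0)
    rw [abs_of_nonneg hr0]
    simpa [sub_eq_add_neg] using this

end ComparisonFunction

section IsoperimetricProfile

variable {A F : ℝ → ℝ} {ε L b s y : ℝ}

/-- The bound on the second derivative of an isoperimetric profile provided by the second variation
of area, in terms of the area `a` and the squared slope `q`. -/
noncomputable def areaRHS (ε a q : ℝ) : ℝ :=
  min (4 * π / a ^ 2 - 3 * q / (4 * a) - 3 / a) (-q / (2 * a) - 2 * ε / a)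

theorem BarrierSupersolutionAt.of_contDiffOn {H : ℝ → ℝ → ℝ} {u : ℝ → ℝ} {δ : ℝ} (hδ : 0 < δ)
    (hu : ContDiffOn ℝ 2 u (Ioo (s - δ) (s + δ))) (heq : u s = F s)
    (hle : ∀ t ∈ Ioo (s - δ) (s + δ), F t ≤ u t)
    (hH : deriv (deriv u) s ≤ H (u s) (deriv u s ^ 2)) : BarrierSupersolutionAt H F s := by
  have hs : s ∈ Ioo (s - δ) (s + δ) := ⟨sub_lt_self s hδ, lt_add_of_pos_right s hδ⟩
  have hnhds := isOpen_Ioo.mem_nhds hs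
  exact ⟨u, deriv u, deriv (deriv u) s,
    eventually_of_mem hnhds fun t ht ↦ hasDerivAt_deriv_of_contDiffOn isOpen_Ioo hu ht,
    hasDerivAt_deriv_deriv_of_contDiffOn isOpen_Ioo hu hs, heq, eventually_of_mem hnhds hle,
    heq ▸ hH⟩

theorem areaRHS_le_brayRHS (ε q : ℝ) {t : ℝ} (ht : 0 < t) :
    3 / 4 * q / t + 3 / 2 * t * areaRHS ε (t ^ 2) q ≤ brayRHS ε (t ^ 3) ((3 / 2 * t) ^ 2 * q) := by
  have ht' : 0 ≤ 3 / 2 * t := by positivity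
  rw [brayRHS, pow_three_rpow_neg_one_third ht.le]
  refine le_min ?_ ?_
  · refine (add_le_add_right (mul_le_mul_of_nonneg_left (min_le_left _ _) ht') _).trans_eq ?_
    field_simp
    ring
  · refine (add_le_add_right (mul_le_mul_of_nonneg_left (min_le_right _ _) ht') _).trans_eq ?_
    field_simp
    ring

theorem BarrierSupersolutionAt.rpow_three_halves (hA : BarrierSupersolutionAt (areaRHS ε) A s)
    (hpos : ∀ᶠ t in 𝓝 s, 0 < A t) :
    BarrierSupersolutionAt (brayRHS ε) (fun t ↦ A t ^ (3 / 2 : ℝ)) s := by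
  obtain ⟨v, v', v'', hv, hv', heq, hle, hH⟩ := hA
  have hvpos : 0 < v s := heq ▸ hpos.self_of_nhds
  refine ⟨fun t ↦ v t ^ (3 / 2 : ℝ), fun t ↦ 3 / 2 * √(v t) * v' t,
    3 / 4 * v' s ^ 2 / √(v s) + 3 / 2 * √(v s) * v'', ?_, ?_, by simp only [heq], ?_, ?_⟩
  · filter_upwards [hv, hpos, hle] with t ht htpos htle
    refine (ht.rpow_const (.inl (htpos.trans_le htle).ne')).congr_deriv ?_
    rw [sqrt_eq_rpow]
    norm_num
    ring
  · refine (((hv.self_of_nhds.sqrt hvpos.ne').const_mul (3 / 2)).mul hv').congr_deriv ?_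
    have := sqrt_pos.2 hvpos
    field_simp
    ring
  · filter_upwards [hpos, hle] with t htpos htle
    exact rpow_le_rpow htpos.le htle (by norm_num)
  · simp only
    have hroot : 0 < √(v s) := sqrt_pos.2 hvpos
    rw [← heq] at hH ⊢
    calc 3 / 4 * v' s ^ 2 / √(v s) + 3 / 2 * √(v s) * v''
        ≤ 3 / 4 * v' s ^ 2 / √(v s) + 3 / 2 * √(v s) * areaRHS ε (√(v s) ^ 2) (v' s ^ 2) := by
          rw [sq_sqrt hvpos.le]
          gcongr
      _ ≤ brayRHS ε (√(v s) ^ 3) ((3 / 2 * √(v s)) ^ 2 * v' s ^ 2) :=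
          areaRHS_le_brayRHS ε _ hroot
      _ = brayRHS ε (v s ^ (3 / 2 : ℝ)) ((3 / 2 * √(v s) * v' s) ^ 2) := by
          rw [← sq_rpow_three_halves hroot.le, sq_sqrt hvpos.le, mul_pow _ (v' s)]

theorem BarrierAscent.le_apply (hF : BarrierAscent (brayRHS ε) F b)
    (hFb : √(4 * π) ^ 3 ≤ F b) (hs : s ∈ Ioc 0 b) (hy : y ∈ Icc 0 (√(4 * π) ^ 3))
    (hys : (√9)⁻¹ * climbTime √(4 * π) y ≤ s) : y ≤ F s := by
  have hR : 0 < √(4 * π) := by positivity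
  by_contra! hlt
  have hFs : F s ∈ Icc 0 (√(4 * π) ^ 3) := ⟨(hF.pos s hs).le, hlt.le.trans hy.2⟩
  have htime : s ≤ (√9)⁻¹ * climbTime √(4 * π) (F s) := by
    refine hF.le_climbTime hR (by norm_num) hFb (fun x hx ↦ ?_) hs hFs.2
    refine (mul_le_mul_of_nonneg_left (brayRHS_le_left ε x _) two_pos.le).trans_eq ?_
    rw [sq_sqrt (by positivity), ← mul_rpow_neg_one_third hx]
    field_simp
    ring
  have := mul_lt_mul_of_pos_left (strictMonoOn_climbTime hR hFs hy hlt)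
    (inv_pos.2 (sqrt_pos.2 (by norm_num : (0 : ℝ) < 9)))
  linarith

namespace BarrierSupersolutionOn

theorem lt_pi_sq_of_isMaxOn {δ t : ℝ} (hF : BarrierSupersolutionOn (brayRHS ε) F L)
    (hε : 0 < ε) (hε' : ε < 1) (hstar : CondStar ε) (hδ : 0 < δ) (hδπ : δ < π ^ 2) (hδt : δ ≤ t)
    (htL : t < L) (hmax : IsMaxOn F (Icc δ t) t) (hFt : F t < √(4 * π) ^ 3) : t < π ^ 2 := by
  rcases hδt.eq_or_lt with rfl | hδt
  · exact hδπ
  · exact (hF.barrierAscent (fun _ q ↦ brayRHS_neg hε q) hδ hδt htL hmax).lt_pi_sq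
      (hδ.trans hδt) hε hε' hstar hFt

/- If the maximum were below `(4π)^(3/2)`, the ascent to it and the descent from it would both take
less than `π²`. -/
theorem exists_isMaxOn_pow_three_le (hF : BarrierSupersolutionOn (brayRHS ε) F L)
    (hε : 0 < ε) (hε' : ε < 1) (hstar : CondStar ε) (hL : 2 * π ^ 2 ≤ L) {δ : ℝ} (hδ : 0 < δ)
    (hδπ : δ < π ^ 2) : ∃ t ∈ Icc δ (L - δ), IsMaxOn F (Icc δ (L - δ)) t ∧ √(4 * π) ^ 3 ≤ F t := by
  have hsub : Icc δ (L - δ) ⊆ Ioo 0 L := fun s hs ↦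
    ⟨hδ.trans_le hs.1, hs.2.trans_lt (sub_lt_self _ hδ)⟩
  obtain ⟨t, ht, hmax⟩ := isCompact_Icc.exists_isMaxOn
    (nonempty_Icc.2 (by linarith : δ ≤ L - δ)) (hF.continuousOn.mono hsub)
  refine ⟨t, ht, hmax, ?_⟩
  by_contra! hFt
  have hascent : t < π ^ 2 := hF.lt_pi_sq_of_isMaxOn hε hε' hstar hδ hδπ ht.1 (hsub ht).2
    (hmax.on_subset (Icc_subset_Icc_right ht.2)) hFt
  have hdescent : L - t < π ^ 2 :=
    hF.reflect.lt_pi_sq_of_isMaxOn hε hε' hstar hδ hδπ (by linarith [ht.2])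
      (sub_lt_self _ (hsub ht).1)
      (fun s hs ↦ by simpa using hmax ⟨by linarith [hs.2, ht.1], by linarith [hs.1]⟩)
      (by simpa using hFt)
  linarith

theorem le_apply_of_le_isMaxOn {δ t : ℝ} (hF : BarrierSupersolutionOn (brayRHS ε) F L)
    (hε : 0 < ε) (hδ : 0 < δ) (hδs : δ < s) (hst : s ≤ t) (htL : t < L)
    (hmax : IsMaxOn F (Icc δ t) t) (hFt : √(4 * π) ^ 3 ≤ F t) (hy : y ∈ Icc 0 (√(4 * π) ^ 3))
    (hys : (√9)⁻¹ * climbTime √(4 * π) y ≤ s) : y ≤ F s :=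
  (hF.barrierAscent (fun _ q ↦ brayRHS_neg hε q) hδ (hδs.trans_le hst) htL hmax).le_apply hFt
    ⟨hδ.trans hδs, hst⟩ hy hys

theorem le_apply (hF : BarrierSupersolutionOn (brayRHS ε) F L) (hε : 0 < ε)
    (hε' : ε < 1) (hstar : CondStar ε) (hL : 2 * π ^ 2 ≤ L) (hs : s ∈ Ioo 0 L)
    (hy : y ∈ Icc 0 (√(4 * π) ^ 3)) (hys : (√9)⁻¹ * climbTime √(4 * π) y ≤ s)
    (hys' : (√9)⁻¹ * climbTime √(4 * π) y ≤ L - s) : y ≤ F s := by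
  obtain ⟨δ, hδ, hδlt⟩ := exists_between (lt_min (lt_min hs.1 (sub_pos.2 hs.2)) (pow_pos pi_pos 2))
  obtain ⟨⟨hδs, hδs'⟩, hδπ⟩ := lt_min_iff.1 hδlt |>.imp_left lt_min_iff.1
  obtain ⟨t, ht, hmax, hFt⟩ := hF.exists_isMaxOn_pow_three_le hε hε' hstar hL hδ hδπ
  rcases le_total s t with hst | hts
  · exact hF.le_apply_of_le_isMaxOn hε hδ hδs hst (by linarith [ht.2])
      (hmax.on_subset (Icc_subset_Icc_right ht.2)) hFt hy hys
  · have := hF.reflect.le_apply_of_le_isMaxOn (t := L - t) hε hδ hδs'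
      (sub_le_sub_left hts _) (sub_lt_self _ (hδ.trans_le ht.1))
      (fun r hr ↦ by simpa using hmax ⟨by linarith [hr.2, ht.1], by linarith [hr.1]⟩)
      (by simpa using hFt) hy hys'
    simpa using this

end BarrierSupersolutionOn

end IsoperimetricProfile

/-- ODE comparison: if `ε ∈ (0,1)` satisfies (★), `A : (0, 2π²) → (0, ∞)` is continuous and
has the second-variation barrier property, and `f` is the comparison function on `(−π², π²)`
(i.e. a C² solution of `f'' = min{(36π − (f')²)/(6f) − (9/2) f^{−1/3}, −3ε f^{−1/3}}` with
`f(0) = (4π)^{3/2}`, `f'(0) = 0` and `f → 0` at `±π²`), then `A(s)^{3/2} ≥ f(s − π²)` on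
`(0, 2π²)`. -/
theorem stmt_13 (ε : ℝ) (hε : ε ∈ Set.Ioo (0:ℝ) 1) (hstar : CondStar ε)
    (A : ℝ → ℝ)
    (hApos : ∀ s ∈ Set.Ioo (0:ℝ) (2 * π ^ 2), 0 < A s)
    (hAcont : ContinuousOn A (Set.Ioo (0:ℝ) (2 * π ^ 2)))
    (hbarrier : ∀ s₀ ∈ Set.Ioo (0:ℝ) (2 * π ^ 2), ∃ δ > (0:ℝ), ∃ u : ℝ → ℝ,
      ContDiffOn ℝ 2 u (Set.Ioo (s₀ - δ) (s₀ + δ)) ∧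
      (∀ s ∈ Set.Ioo (s₀ - δ) (s₀ + δ), 0 < u s) ∧
      u s₀ = A s₀ ∧
      (∀ s ∈ Set.Ioo (s₀ - δ) (s₀ + δ), A s ≤ u s) ∧
      deriv (deriv u) s₀
        ≤ min (4 * π / (u s₀) ^ 2 - 3 * (deriv u s₀) ^ 2 / (4 * u s₀) - 3 / (u s₀))
              (-(deriv u s₀) ^ 2 / (2 * u s₀) - 2 * ε / (u s₀)))
    (f : ℝ → ℝ)
    (hfmem : ∀ s ∈ Set.Ioo (-(π ^ 2)) (π ^ 2), f s ∈ Set.Ioc (0:ℝ) ((4 * π) ^ (3/2 : ℝ)))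
    (hfC2 : ContDiffOn ℝ 2 f (Set.Ioo (-(π ^ 2)) (π ^ 2)))
    (hfode : ∀ s ∈ Set.Ioo (-(π ^ 2)) (π ^ 2),
      deriv (deriv f) s
        = min ((36 * π - (deriv f s) ^ 2) / (6 * f s) - (9/2) * (f s) ^ (-(1/3) : ℝ))
              (-3 * ε * (f s) ^ (-(1/3) : ℝ)))
    (hf0 : f 0 = (4 * π) ^ (3/2 : ℝ)) (hf0' : deriv f 0 = 0)
    (hflim₁ : Filter.Tendsto f
      (nhdsWithin (π ^ 2) (Set.Ioo (-(π ^ 2)) (π ^ 2))) (nhds 0))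
    (hflim₂ : Filter.Tendsto f
      (nhdsWithin (-(π ^ 2)) (Set.Ioo (-(π ^ 2)) (π ^ 2))) (nhds 0)) :
    ∀ s ∈ Set.Ioo (0:ℝ) (2 * π ^ 2), f (s - π ^ 2) ≤ (A s) ^ (3/2 : ℝ) := by
  intro s hs
  have hsq : √(4 * π) ^ 2 = 4 * π := sq_sqrt (by positivity)
  have hpow : (4 * π) ^ (3 / 2 : ℝ) = √(4 * π) ^ 3 := by
    rw [← sq_rpow_three_halves (sqrt_nonneg _), hsq]
  have hF : BarrierSupersolutionOn (brayRHS ε) (fun s ↦ A s ^ (3 / 2 : ℝ)) (2 * π ^ 2) := by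
    refine ⟨fun s hs ↦ rpow_pos_of_pos (hApos s hs) _,
      hAcont.rpow_const fun s hs ↦ .inl (hApos s hs).ne', fun s hs ↦ ?_⟩
    obtain ⟨δ, hδ, u, hu, -, heq, hle, hu''⟩ := hbarrier s hs
    exact (BarrierSupersolutionAt.of_contDiffOn hδ hu heq hle hu'').rpow_three_halves
      (eventually_of_mem (isOpen_Ioo.mem_nhds hs) hApos)
  have hr : s - π ^ 2 ∈ Ioo (-(π ^ 2)) (π ^ 2) := ⟨by linarith [hs.1], by linarith [hs.2]⟩
  have htime := climbTime_le_sub_abs hε.1 hfC2 (fun r hr ↦ (hfmem r hr).1)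
    (fun r hr ↦ (hfode r hr).le) (hf0.trans hpow) hf0' hr
  exact hF.le_apply hε.1 hε.2 hstar le_rfl hs ⟨(hfmem _ hr).1.le, hpow ▸ (hfmem _ hr).2⟩
    (by linarith [neg_abs_le (s - π ^ 2)]) (by linarith [le_abs_self (s - π ^ 2)])
end

section
/- Let n ≥ 3 be an integer and c > 0 a real number, and define the polynomial p(t) = −c − 1 + ((n−1)/2) t² + ((n−1)(n+1)/24) t⁴ + ((n−1)(n+1)(n+3)/240) t⁶. Then for every t ∈ ℝ, (1 − t²) p''(t) − (n−1) t p'(t) + (n−1) p(t) = −(n−1)c − ((n−1)(n+1)(n+3)(n+5)/48) t⁶; in particular this quantity is strictly negative for all t. -/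
/-- The polynomial `p(t) = −c − 1 + ((n−1)/2)t² + ((n−1)(n+1)/24)t⁴ + ((n−1)(n+1)(n+3)/240)t⁶`
from the Brendle–Marques–Neves construction. -/
noncomputable def pPoly (n : ℕ) (c : ℝ) (t : ℝ) : ℝ :=
  -c - 1 + (((n:ℝ) - 1) / 2) * t ^ 2 + (((n:ℝ) - 1) * ((n:ℝ) + 1) / 24) * t ^ 4
    + (((n:ℝ) - 1) * ((n:ℝ) + 1) * ((n:ℝ) + 3) / 240) * t ^ 6

/-!
The operator `L p = (1 - t²) p'' - ν t p' + ν p` sends `t ^ (k + 2)` to a combination of `t ^ k` and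
`t ^ (k + 2)` only. A two-term recurrence on the coefficients therefore makes `L` telescope on an
even polynomial, leaving one multiple of its top power. Up to the constant `-c`, the polynomial
`p` is the degree-six truncation of the even power series solution of `L p = 0` with value `-1` at
the origin, for `ν = n - 1`; the surviving coefficient is negative, and `L` sends `-c` to `-ν c`.
-/

section ZonalOperator

open Polynomial Finset

/-- The operator `p ↦ (1 - X²) p'' - ν X p' + ν p`. For `ν = n - 1` it is `Δ + (n - 1)` on the
sphere `S^(n-1)`, acting on zonal functions `x ↦ p(x_n)`. -/
noncomputable def zonalOperator {R : Type*} [CommRing R] (ν : R) : R[X] →ₗ[R] R[X] :=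
  LinearMap.mulLeft R (1 - X ^ 2) ∘ₗ derivative ∘ₗ derivative
    - ν • (LinearMap.mulLeft R X ∘ₗ derivative) + ν • LinearMap.id

section CommRing

variable {R : Type*} [CommRing R] (ν : R)

theorem zonalOperator_apply (p : R[X]) :
    zonalOperator ν p
      = (1 - X ^ 2) * derivative (derivative p) - C ν * X * derivative p + C ν * p := by
  simp [zonalOperator, smul_eq_C_mul, mul_assoc]

theorem zonalOperator_C (a : R) : zonalOperator ν (C a) = C (ν * a) := by
  simp [zonalOperator_apply]

theorem zonalOperator_X_pow_add_two (k : ℕ) :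
    zonalOperator ν (X ^ (k + 2))
      = C ((k + 2) * (k + 1) : R) * X ^ k - C ((k + 1) * (k + 2 + ν) : R) * X ^ (k + 2) := by
  rw [zonalOperator_apply, derivative_X_pow_succ, derivative_C_mul, derivative_X_pow_succ]
  push_cast
  simp only [C_add, C_mul, C_1, C_ofNat]
  ring

theorem zonalOperator_sum_even {a : ℕ → R}
    (ha : ∀ k : ℕ, (2 * k + 2) * (2 * k + 1) * a (k + 1) = (2 * k - 1) * (2 * k + ν) * a k)
    (N : ℕ) :
    zonalOperator ν (∑ k ∈ range (N + 1), C (a k) * X ^ (2 * k))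
      = -C ((2 * N - 1) * (2 * N + ν) * a N) * X ^ (2 * N) := by
  induction N with
  | zero => simp [zonalOperator_C]
  | succ N ih =>
    have top_term : zonalOperator ν (C (a (N + 1)) * X ^ (2 * (N + 1)))
        = C ((2 * N + 2) * (2 * N + 1) * a (N + 1)) * X ^ (2 * N)
          - C ((2 * (N + 1 : ℕ) - 1) * (2 * (N + 1 : ℕ) + ν) * a (N + 1)) * X ^ (2 * (N + 1)) := by
      rw [← smul_eq_C_mul, map_smul, mul_add_one, zonalOperator_X_pow_add_two, smul_eq_C_mul]
      push_cast
      simp only [C_add, C_sub, C_mul, C_1, C_ofNat]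
      ring
    rw [sum_range_succ, map_add, ih, top_term, ha]
    ring

end CommRing

theorem eval_zonalOperator {𝕜 : Type*} [NontriviallyNormedField 𝕜] (ν : 𝕜) (p : 𝕜[X]) (t : 𝕜) :
    (zonalOperator ν p).eval t
      = (1 - t ^ 2) * deriv (deriv fun s => p.eval s) t - ν * t * deriv (fun s => p.eval s) t
        + ν * p.eval t := by
  have deriv_eval : (deriv fun s => p.eval s) = fun s => (derivative p).eval s :=
    funext fun _ => p.deriv
  rw [deriv_eval, Polynomial.deriv, zonalOperator_apply]
  simp only [eval_add, eval_sub, eval_mul, eval_pow, eval_X, eval_C, eval_one]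

end ZonalOperator

section ZonalCoeff

/-- The coefficient of `t ^ (2 * k)` in the even power series solution, with value `-1` at `0`, of
`(1 - t²) p'' - ν t p' + ν p = 0`, over a field of characteristic zero; otherwise some
denominators vanish and `x / 0 = 0` makes the value meaningless. -/
def zonalCoeff {K : Type*} [Field K] (ν : K) : ℕ → K
  | 0 => -1
  | k + 1 => (2 * k - 1) * (2 * k + ν) / ((2 * k + 2) * (2 * k + 1)) * zonalCoeff ν k

theorem zonalCoeff_succ_mul {K : Type*} [Field K] [CharZero K] (ν : K) (k : ℕ) :
    (2 * k + 2) * (2 * k + 1) * zonalCoeff ν (k + 1)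
      = (2 * k - 1) * (2 * k + ν) * zonalCoeff ν k := by
  have odd_ne_zero : (2 * k + 1 : K) ≠ 0 := by exact_mod_cast (2 * k).succ_ne_zero
  have even_ne_zero : (2 * k + 2 : K) ≠ 0 := by exact_mod_cast (2 * k + 1).succ_ne_zero
  rw [zonalCoeff, ← mul_assoc, mul_div_cancel₀ _ (mul_ne_zero even_ne_zero odd_ne_zero)]

theorem zonalCoeff_three {K : Type*} [Field K] [CharZero K] (ν : K) :
    zonalCoeff ν 3 = ν * (ν + 2) * (ν + 4) / 240 := by
  simp only [zonalCoeff]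
  push_cast
  ring

-- The factor `2 * k - 1` absorbs the sign change of the coefficients between `k = 0` and `k = 1`.
theorem two_mul_sub_one_mul_zonalCoeff_pos {K : Type*} [Field K] [LinearOrder K]
    [IsStrictOrderedRing K] {ν : K} (hν : 0 < ν) (k : ℕ) :
    0 < (2 * k - 1) * zonalCoeff ν k := by
  induction k with
  | zero => simp [zonalCoeff]
  | succ k ih =>
    have factor : (2 * (k + 1 : ℕ) - 1) * zonalCoeff ν (k + 1)
        = (2 * k + 1) * (2 * k + ν) / ((2 * k + 2) * (2 * k + 1))
          * ((2 * k - 1) * zonalCoeff ν k) := by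
      rw [zonalCoeff]
      push_cast
      ring
    rw [factor]
    positivity

end ZonalCoeff

open Polynomial Finset in
theorem zonal_truncation_identity {𝕜 : Type*} [NontriviallyNormedField 𝕜] [CharZero 𝕜] {ν c : 𝕜}
    {N : ℕ} {p : 𝕜 → 𝕜}
    (hp : ∀ s, p s = -c + ∑ k ∈ range (N + 1), zonalCoeff ν k * s ^ (2 * k)) (t : 𝕜) :
    (1 - t ^ 2) * deriv (deriv p) t - ν * t * deriv p t + ν * p t
      = -ν * c - (2 * N - 1) * (2 * N + ν) * zonalCoeff ν N * t ^ (2 * N) := by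
  have p_eq_eval :
      p = fun s => (C (-c) + ∑ k ∈ range (N + 1), C (zonalCoeff ν k) * X ^ (2 * k)).eval s := by
    funext s
    simp [hp, eval_finsetSum]
  rw [p_eq_eval, ← eval_zonalOperator, map_add, zonalOperator_C,
    zonalOperator_sum_even ν (zonalCoeff_succ_mul ν)]
  simp only [eval_add, eval_mul, eval_neg, eval_pow, eval_X, eval_C]
  ring

theorem stmt_15_general {ν c : ℝ} (hν : 0 < ν) (hc : 0 < c) {N : ℕ} {p : ℝ → ℝ}
    (hp : ∀ s, p s = -c + ∑ k ∈ Finset.range (N + 1), zonalCoeff ν k * s ^ (2 * k)) (t : ℝ) :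
    (1 - t ^ 2) * deriv (deriv p) t - ν * t * deriv p t + ν * p t
      = -ν * c - (2 * N - 1) * (2 * N + ν) * zonalCoeff ν N * t ^ (2 * N) ∧
    (1 - t ^ 2) * deriv (deriv p) t - ν * t * deriv p t + ν * p t < 0 := by
  refine ⟨zonal_truncation_identity hp t, ?_⟩
  have top_nonneg : 0 ≤ (2 * N + ν) * ((2 * N - 1) * zonalCoeff ν N) * t ^ (2 * N) :=
    mul_nonneg (mul_nonneg (by positivity) (two_mul_sub_one_mul_zonalCoeff_pos hν N).le)
      ((even_two_mul N).pow_nonneg t)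
  linarith [zonal_truncation_identity hp t, mul_pos hν hc]

theorem pPoly_eq_neg_add_sum (n : ℕ) (c t : ℝ) :
    pPoly n c t
      = -c + ∑ k ∈ Finset.range (3 + 1), zonalCoeff ((n : ℝ) - 1) k * t ^ (2 * k) := by
  simp only [pPoly, Finset.sum_range_succ, Finset.sum_range_zero, zonalCoeff]
  push_cast
  ring

/-- For `n ≥ 3` and `c > 0`:
`(1 − t²) p''(t) − (n−1) t p'(t) + (n−1) p(t) = −(n−1)c − ((n−1)(n+1)(n+3)(n+5)/48) t⁶ < 0`. -/
theorem stmt_15 (n : ℕ) (hn : 3 ≤ n) (c : ℝ) (hc : 0 < c) (t : ℝ) :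
    (1 - t ^ 2) * deriv (deriv (pPoly n c)) t - ((n:ℝ) - 1) * t * deriv (pPoly n c) t
        + ((n:ℝ) - 1) * pPoly n c t
      = -((n:ℝ) - 1) * c
        - (((n:ℝ) - 1) * ((n:ℝ) + 1) * ((n:ℝ) + 3) * ((n:ℝ) + 5) / 48) * t ^ 6 ∧
    (1 - t ^ 2) * deriv (deriv (pPoly n c)) t - ((n:ℝ) - 1) * t * deriv (pPoly n c) t
        + ((n:ℝ) - 1) * pPoly n c t < 0 := by
  have hν : 0 < (n : ℝ) - 1 := sub_pos.mpr (by exact_mod_cast (by omega : 1 < n))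
  convert stmt_15_general hν hc (pPoly_eq_neg_add_sum n c) t using 2
  rw [zonalCoeff_three]
  push_cast
  ring
end

section
/- Let n ≥ 3 be an integer. For every sufficiently small c > 0, with p(t) = −c − 1 + ((n−1)/2) t² + ((n−1)(n+1)/24) t⁴ + ((n−1)(n+1)(n+3)/240) t⁶, one has ∫_{S^{n−1}} ( (1 − x_n²) p'(x_n)² − (n−1) p(x_n)² ) dσ(x) > 0, where the integral is taken with respect to the surface measure σ on the unit sphere S^{n−1} ⊂ ℝⁿ. -/
open Real MeasureTheory

/-!
Reflection invariance of the surface measure `σ` gives, for orthonormal `u` and `v`,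
`∫ f'(⟪u, x⟫) ⟪v, x⟫² dσ = ∫ f(⟪u, x⟫) ⟪u, x⟫ dσ`. Summing over an orthonormal basis of `uᗮ` turns
this into integration by parts for zonal functions, so that the integral of the theorem becomes
`-∫ p · Jp dσ`, where `J` is the Jacobi operator. The polynomial `p` is chosen such that
`-Jp = (n - 1) c + κ t⁶` for a constant `κ > 0`. At `c = 0` it therefore suffices that
`∫ p t⁶ dσ > 0`, which is a relation between the even moments of `σ`; these satisfy a two-term
recurrence, again by integration by parts. Continuity in `c` then covers small `c`.
-/

section CompactSupport

variable {X F : Type*} [TopologicalSpace X] [MeasurableSpace X] [OpensMeasurableSpace X]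
  [NormedAddCommGroup F] [SecondCountableTopologyEither X F] {μ : Measure X} [IsFiniteMeasure μ]
  {K : Set X}

lemma integrable_of_ae_mem_isCompact (hK : IsCompact K) (hμK : ∀ᵐ x ∂μ, x ∈ K) {f : X → F}
    (hf : Continuous f) : Integrable f μ := by
  obtain ⟨C, hC⟩ := hK.exists_bound_of_continuousOn hf.continuousOn
  exact .of_bound hf.aestronglyMeasurable C (hμK.mono hC)

lemma hasDerivAt_integral_of_ae_mem_isCompact [NormedSpace ℝ F] (hK : IsCompact K)
    (hμK : ∀ᵐ x ∂μ, x ∈ K) {f f' : ℝ → X → F} (hf : ∀ t, Continuous (f t))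
    (hf' : Continuous f'.uncurry) (hderiv : ∀ t x, HasDerivAt (f · x) (f' t x) t) (t₀ : ℝ) :
    HasDerivAt (fun t ↦ ∫ x, f t x ∂μ) (∫ x, f' t₀ x ∂μ) t₀ := by
  obtain ⟨C, hC⟩ := ((isCompact_closedBall t₀ 1).prod hK).exists_bound_of_continuousOn
    hf'.continuousOn
  exact (hasDerivAt_integral_of_dominated_loc_of_deriv_le
    (Metric.closedBall_mem_nhds t₀ one_pos)
    (.of_forall fun t ↦ (hf t).aestronglyMeasurable)
    (integrable_of_ae_mem_isCompact hK hμK (hf t₀))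
    (hf'.comp (Continuous.prodMk_right t₀)).aestronglyMeasurable
    (hμK.mono fun x hx t ht ↦ hC (t, x) ⟨ht, hx⟩) (integrable_const C)
    (.of_forall fun x t _ ↦ hderiv t x)).2

end CompactSupport

section Sphere

open Metric Module
open scoped RealInnerProductSpace

variable {E : Type*} [NormedAddCommGroup E] [InnerProductSpace ℝ E]

lemma norm_stereoToFun_le_two {v x : E} (hx : ‖x‖ = 1) (hvx : ⟪v, x⟫ ≤ 0) :
    ‖stereoToFun v x‖ ≤ 2 := by
  have hscale : ‖2 / (1 - ⟪v, x⟫)‖ ≤ 2 := by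
    rw [Real.norm_of_nonneg (div_nonneg zero_le_two (by linarith))]
    exact div_le_self zero_le_two (by linarith)
  calc ‖stereoToFun v x‖ = ‖2 / (1 - ⟪v, x⟫)‖ * ‖(ℝ ∙ v)ᗮ.orthogonalProjectionOnto x‖ := by
        rw [stereoToFun_apply, norm_smul, innerSL_apply_apply]
    _ ≤ 2 * 1 := by
        gcongr
        exact hx ▸ (ℝ ∙ v)ᗮ.norm_orthogonalProjectionOnto_apply_le x
    _ = 2 := mul_one 2

lemma sphere_inter_halfSpace_subset_image_stereoInvFunAux {v : E} (hv : ‖v‖ = 1) :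
    sphere 0 1 ∩ {x : E | ⟪v, x⟫ ≤ 0} ⊆
      (fun w : (ℝ ∙ v)ᗮ ↦ stereoInvFunAux v w) '' closedBall 0 2 := by
  rintro x ⟨hx, hvx : ⟪v, x⟫ ≤ 0⟩
  have hne : x ≠ v := by
    rintro rfl
    rw [real_inner_self_eq_norm_sq, hv] at hvx
    norm_num at hvx
  exact ⟨stereoToFun v x,
    mem_closedBall_zero_iff.2 (norm_stereoToFun_le_two (mem_sphere_zero_iff_norm.1 hx) hvx),
    congrArg Subtype.val (stereo_left_inv hv (x := ⟨x, hx⟩) hne)⟩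

lemma closedBall_subset_image_orthogonalProjectionOnto_sphere {v : E} (hv : ‖v‖ = 1) :
    closedBall 0 1 ⊆ (ℝ ∙ v)ᗮ.orthogonalProjectionOnto '' sphere (0 : E) 1 := by
  intro w hw
  have hw1 : ‖(w : E)‖ ≤ 1 := mem_closedBall_zero_iff.1 hw
  have hwv : ⟪(w : E), v⟫ = 0 := Submodule.mem_orthogonal_singleton_iff_inner_left.1 w.2
  have hPv : (ℝ ∙ v)ᗮ.orthogonalProjectionOnto v = 0 :=
    Submodule.orthogonalProjectionOnto_orthogonal_apply_eq_zero
      (Submodule.mem_span_singleton_self v)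
  refine ⟨w + √(1 - ‖(w : E)‖ ^ 2) • v, ?_, by simp [hPv]⟩
  have hsqrt : √(1 - ‖(w : E)‖ ^ 2) ^ 2 = 1 - ‖(w : E)‖ ^ 2 :=
    sq_sqrt (sub_nonneg.2 (pow_le_one₀ (norm_nonneg _) hw1))
  rw [mem_sphere_zero_iff_norm, ← sq_eq_sq₀ (norm_nonneg _) zero_le_one, norm_add_sq_real,
    inner_smul_right, hwv, norm_smul, hv, Real.norm_eq_abs, mul_one, sq_abs, hsqrt]
  ring

/-- A finite measure on `E` that is carried by the unit sphere and invariant under linear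
isometries: a multiple of the surface measure, considered as a measure on the ambient space. -/
structure IsSphericalMeasure [MeasurableSpace E] (ν : Measure E) : Prop where
  isFiniteMeasure : IsFiniteMeasure ν
  ae_norm_eq_one : ∀ᵐ x ∂ν, ‖x‖ = 1
  measurePreserving (R : E ≃ₗᵢ[ℝ] E) : MeasurePreserving R ν ν

lemma IsSphericalMeasure.ae_mem_sphere [MeasurableSpace E] {ν : Measure E}
    (hν : IsSphericalMeasure ν) : ∀ᵐ x ∂ν, x ∈ sphere 0 1 :=
  hν.ae_norm_eq_one.mono fun _ ↦ mem_sphere_zero_iff_norm.2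

lemma integral_comp_inner_mul_inner_eq_zero [MeasurableSpace E] [BorelSpace E] {ν : Measure E}
    {u v : E} (hν : MeasurePreserving (ℝ ∙ v)ᗮ.reflection ν ν) (huv : ⟪u, v⟫ = 0) (f : ℝ → ℝ) :
    ∫ x, f ⟪u, x⟫ * ⟪v, x⟫ ∂ν = 0 := by
  let R := (ℝ ∙ v)ᗮ.reflection
  have hRu : R u = u := Submodule.reflection_mem_subspace_eq_self
    (Submodule.mem_orthogonal_singleton_iff_inner_left.2 huv)
  have hRv : R v = -v := Submodule.reflection_orthogonalComplement_singleton_eq_neg v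
  have hR (w x : E) : ⟪w, R x⟫ = ⟪R w, x⟫ := by
    rw [← R.inner_map_map, Submodule.reflection_reflection]
  refine self_eq_neg.1 ?_
  calc ∫ x, f ⟪u, x⟫ * ⟪v, x⟫ ∂ν
      = ∫ x, f ⟪u, R x⟫ * ⟪v, R x⟫ ∂ν :=
        (hν.integral_comp R.toHomeomorph.measurableEmbedding _).symm
    _ = -∫ x, f ⟪u, x⟫ * ⟪v, x⟫ ∂ν := by
        simp only [hR, hRu, hRv, inner_neg_left, mul_neg, integral_neg]

variable [FiniteDimensional ℝ E]

lemma finrank_orthogonal_span_singleton_eq_sub_one {v : E} (hv : v ≠ 0) :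
    (finrank ℝ (ℝ ∙ v)ᗮ : ℝ) = finrank ℝ E - 1 := by
  rw [← (ℝ ∙ v).finrank_add_finrank_orthogonal, finrank_span_singleton hv]
  push_cast
  ring

section SurfaceMeasure

variable [MeasurableSpace E] [BorelSpace E]

lemma hausdorffMeasure_sphere_inter_halfSpace_lt_top {v : E} (hv : ‖v‖ = 1) :
    (μH[finrank ℝ E - 1] : Measure E) (sphere 0 1 ∩ {x | ⟪v, x⟫ ≤ 0}) < ⊤ := by
  rw [← finrank_orthogonal_span_singleton_eq_sub_one (norm_ne_zero_iff.1 (hv ▸ one_ne_zero))]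
  have hsmooth : ContDiff ℝ 1 (fun w : (ℝ ∙ v)ᗮ ↦ stereoInvFunAux v (w : E)) :=
    contDiff_stereoInvFunAux.comp (ℝ ∙ v)ᗮ.subtypeL.contDiff
  obtain ⟨K, hK⟩ := hsmooth.contDiffOn.exists_lipschitzOnWith (s := closedBall 0 2) one_ne_zero
    (convex_closedBall _ _) (isCompact_closedBall _ _)
  refine (measure_mono (sphere_inter_halfSpace_subset_image_stereoInvFunAux hv)).trans_lt
    ((hK.hausdorffMeasure_image_le (Nat.cast_nonneg _)).trans_lt ?_)
  exact ENNReal.mul_lt_top (by simp) (isCompact_closedBall _ _).measure_lt_top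

variable (E) in
lemma hausdorffMeasure_sphere_lt_top :
    (μH[finrank ℝ E - 1] : Measure E) (sphere 0 1) < ⊤ := by
  obtain hempty | ⟨v, hv⟩ := (sphere (0 : E) 1).eq_empty_or_nonempty
  · simp [hempty]
  have hv : ‖v‖ = 1 := mem_sphere_zero_iff_norm.1 hv
  refine (measure_mono fun x hx ↦ ?_).trans_lt
    (measure_union_lt_top (hausdorffMeasure_sphere_inter_halfSpace_lt_top hv)
      (hausdorffMeasure_sphere_inter_halfSpace_lt_top ((norm_neg v).trans hv)))
  rcases le_total ⟪v, x⟫ 0 with hneg | hpos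
  · exact .inl ⟨hx, hneg⟩
  · exact .inr ⟨hx, by simpa using hpos⟩

variable (E) in
lemma hausdorffMeasure_sphere_pos [Nontrivial E] :
    0 < (μH[finrank ℝ E - 1] : Measure E) (sphere 0 1) := by
  obtain ⟨v, hv⟩ := exists_norm_eq E zero_le_one
  rw [← finrank_orthogonal_span_singleton_eq_sub_one (norm_ne_zero_iff.1 (hv ▸ one_ne_zero))]
  calc 0 < (μH[finrank ℝ (ℝ ∙ v)ᗮ] : Measure (ℝ ∙ v)ᗮ) (closedBall 0 1) :=
        measure_closedBall_pos _ _ one_pos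
    _ ≤ μH[finrank ℝ (ℝ ∙ v)ᗮ] ((ℝ ∙ v)ᗮ.orthogonalProjectionOnto '' sphere (0 : E) 1) :=
        measure_mono (closedBall_subset_image_orthogonalProjectionOnto_sphere hv)
    _ ≤ μH[finrank ℝ (ℝ ∙ v)ᗮ] (sphere 0 1) :=
        hausdorffMeasure_orthogonalProjectionOnto_le _ _ _ (Nat.cast_nonneg _)

end SurfaceMeasure

lemma sum_inner_sq_stdOrthonormalBasis_orthogonal {u : E} (hu : ‖u‖ = 1) (x : E) :
    ∑ i, ⟪(stdOrthonormalBasis ℝ (ℝ ∙ u)ᗮ i : E), x⟫ ^ 2 = ‖x‖ ^ 2 - ⟪u, x⟫ ^ 2 := by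
  have hcoord (w : (ℝ ∙ u)ᗮ) : ⟪(w : E), x⟫ = ⟪w, (ℝ ∙ u)ᗮ.orthogonalProjectionOnto x⟫ :=
    (Submodule.inner_orthogonalProjectionOnto_eq_of_mem_left w x).symm
  simp_rw [hcoord, OrthonormalBasis.sum_sq_inner_right]
  have hspan : ‖(ℝ ∙ u).orthogonalProjectionOnto x‖ = |⟪u, x⟫| := by
    rw [Submodule.coe_norm, ← Submodule.starProjection_apply,
      Submodule.starProjection_unit_singleton ℝ hu, norm_smul, hu, mul_one, Real.norm_eq_abs]
  rw [Submodule.norm_sq_eq_add_norm_sq_projection x (ℝ ∙ u), hspan, sq_abs, add_sub_cancel_left]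

/-- The second variation `∫ (|∇η|² - (dim E - 1) η²) dν` of the area of the equator, the unit sphere
of `E` inside that of `E × ℝ`, along a normal field of zonal height `η = p ⟪u, ·⟫` with `‖u‖ = 1`.
The tangential gradient of such a height satisfies `|∇η|² = (1 - ⟪u, x⟫²) p'(⟪u, x⟫)²`. -/
noncomputable def zonalEnergy [MeasurableSpace E] (ν : Measure E) (u : E) (p : ℝ → ℝ) : ℝ :=
  ∫ x, ((1 - ⟪u, x⟫ ^ 2) * deriv p ⟪u, x⟫ ^ 2 - (finrank ℝ E - 1) * p ⟪u, x⟫ ^ 2) ∂ν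

/-- The Jacobi operator `Δ + m` of the `m`-dimensional equator of a unit sphere, acting on zonal
functions `x ↦ p ⟪u, x⟫` with `‖u‖ = 1` and expressed in the variable `t = ⟪u, x⟫`. -/
noncomputable def zonalJacobi (m : ℝ) (p : ℝ → ℝ) (t : ℝ) : ℝ :=
  (1 - t ^ 2) * deriv (deriv p) t - m * t * deriv p t + m * p t

namespace IsSphericalMeasure

variable [MeasurableSpace E] [BorelSpace E] {ν : Measure E}

variable (E) in
protected lemma hausdorffMeasure_restrict_sphere :
    IsSphericalMeasure ((μH[finrank ℝ E - 1] : Measure E).restrict (sphere 0 1)) where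
  isFiniteMeasure := isFiniteMeasure_restrict.2 (hausdorffMeasure_sphere_lt_top E).ne
  ae_norm_eq_one := by
    filter_upwards [ae_restrict_mem isClosed_sphere.measurableSet] with x hx
    exact mem_sphere_zero_iff_norm.1 hx
  measurePreserving R := by
    have hpreimage : R.toIsometryEquiv ⁻¹' sphere 0 1 = sphere 0 1 := by ext x; simp
    have hR := (R.toIsometryEquiv.measurePreserving_hausdorffMeasure
      (finrank ℝ E - 1)).restrict_preimage (s := sphere 0 1) isClosed_sphere.measurableSet
    rwa [hpreimage] at hR

lemma integrable (hν : IsSphericalMeasure ν) {f : E → ℝ} (hf : Continuous f) : Integrable f ν :=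
  have := hν.isFiniteMeasure
  integrable_of_ae_mem_isCompact (isCompact_sphere 0 1) hν.ae_mem_sphere hf

-- `u + t v` and `v - t u` are orthogonal for every `t`; differentiate the resulting identity
-- `∫ f ⟪u + t v, x⟫ ⟪v - t u, x⟫ = 0` at `t = 0`.
lemma integral_deriv_comp_inner_mul_inner_sq (hν : IsSphericalMeasure ν) {f : ℝ → ℝ}
    (hf : ContDiff ℝ 1 f) {u v : E} (hnorm : ‖u‖ = ‖v‖) (huv : ⟪u, v⟫ = 0) :
    ∫ x, deriv f ⟪u, x⟫ * ⟪v, x⟫ ^ 2 ∂ν = ∫ x, f ⟪u, x⟫ * ⟪u, x⟫ ∂ν := by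
  have := hν.isFiniteMeasure
  have : Continuous (deriv f) := hf.continuous_deriv_one
  have : Continuous f := hf.continuous
  have hvanish (t : ℝ) : ∫ x, f ⟪u + t • v, x⟫ * ⟪v - t • u, x⟫ ∂ν = 0 := by
    refine integral_comp_inner_mul_inner_eq_zero (hν.measurePreserving _) ?_ f
    simp only [inner_add_left, inner_sub_right, inner_smul_left, inner_smul_right,
      real_inner_self_eq_norm_sq, real_inner_comm u v, huv, hnorm, conj_trivial]
    ring
  have hderiv (t : ℝ) (x : E) : HasDerivAt (fun t ↦ f ⟪u + t • v, x⟫ * ⟪v - t • u, x⟫)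
      (deriv f ⟪u + t • v, x⟫ * ⟪v, x⟫ * ⟪v - t • u, x⟫ + f ⟪u + t • v, x⟫ * -⟪u, x⟫) t := by
    simp only [inner_add_left, inner_sub_left, inner_smul_left, conj_trivial]
    have hplus : HasDerivAt (fun t ↦ ⟪u, x⟫ + t * ⟪v, x⟫) ⟪v, x⟫ t := by
      simpa using ((hasDerivAt_id t).mul_const ⟪v, x⟫).const_add ⟪u, x⟫
    have hminus : HasDerivAt (fun t ↦ ⟪v, x⟫ - t * ⟪u, x⟫) (-⟪u, x⟫) t := by
      simpa using ((hasDerivAt_id t).mul_const ⟪u, x⟫).const_sub ⟪v, x⟫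
    exact ((hf.differentiable_one _).hasDerivAt.comp t hplus).mul hminus
  have hderiv_zero := hasDerivAt_integral_of_ae_mem_isCompact (isCompact_sphere 0 1)
    hν.ae_mem_sphere (fun t ↦ by fun_prop) (by unfold Function.uncurry; fun_prop) hderiv 0
  simp only [hvanish, zero_smul, add_zero, sub_zero] at hderiv_zero
  have hzero := hderiv_zero.unique (hasDerivAt_const 0 0)
  rw [integral_add (hν.integrable (by fun_prop)) (hν.integrable (by fun_prop))] at hzero
  simp only [mul_neg, integral_neg, mul_assoc, ← sq] at hzero
  linarith

lemma integral_one_sub_sq_mul_deriv (hν : IsSphericalMeasure ν) {f : ℝ → ℝ}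
    (hf : ContDiff ℝ 1 f) {u : E} (hu : ‖u‖ = 1) :
    ∫ x, (1 - ⟪u, x⟫ ^ 2) * deriv f ⟪u, x⟫ ∂ν =
      (finrank ℝ E - 1) * ∫ x, f ⟪u, x⟫ * ⟪u, x⟫ ∂ν := by
  have : Continuous (deriv f) := hf.continuous_deriv_one
  let b := stdOrthonormalBasis ℝ (ℝ ∙ u)ᗮ
  have hb (i) : ∫ x, deriv f ⟪u, x⟫ * ⟪(b i : E), x⟫ ^ 2 ∂ν = ∫ x, f ⟪u, x⟫ * ⟪u, x⟫ ∂ν :=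
    hν.integral_deriv_comp_inner_mul_inner_sq hf (hu.trans (b.norm_eq_one i).symm)
      (Submodule.mem_orthogonal_singleton_iff_inner_right.1 (b i).2)
  calc ∫ x, (1 - ⟪u, x⟫ ^ 2) * deriv f ⟪u, x⟫ ∂ν
      = ∫ x, ∑ i, deriv f ⟪u, x⟫ * ⟪(b i : E), x⟫ ^ 2 ∂ν := by
        refine integral_congr_ae (hν.ae_norm_eq_one.mono fun x hx ↦ ?_)
        simp only [← Finset.mul_sum, b, sum_inner_sq_stdOrthonormalBasis_orthogonal hu, hx, one_pow,
          mul_comm]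
    _ = (finrank ℝ E - 1) * ∫ x, f ⟪u, x⟫ * ⟪u, x⟫ ∂ν := by
        rw [integral_finsetSum _ fun i _ ↦ hν.integrable (by fun_prop)]
        simp only [hb, Finset.sum_const, Finset.card_univ, Fintype.card_fin, nsmul_eq_mul]
        rw [finrank_orthogonal_span_singleton_eq_sub_one (norm_ne_zero_iff.1 (hu ▸ one_ne_zero))]

lemma zonalEnergy_eq_neg_integral_mul_zonalJacobi (hν : IsSphericalMeasure ν) {p : ℝ → ℝ}
    (hp : ContDiff ℝ 2 p) {u : E} (hu : ‖u‖ = 1) :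
    zonalEnergy ν u p = -∫ x, p ⟪u, x⟫ * zonalJacobi (finrank ℝ E - 1) p ⟪u, x⟫ ∂ν := by
  have hp' : ContDiff ℝ 1 (deriv p) := hp.deriv'
  have hp1 : ContDiff ℝ 1 p := hp.of_le one_le_two
  have : Continuous (deriv (deriv p)) := hp'.continuous_deriv_one
  have : Continuous p := hp.continuous
  have : Continuous (deriv p) := hp'.continuous
  have hparts := hν.integral_one_sub_sq_mul_deriv (f := p * deriv p) (hp1.mul hp') hu
  have hproduct (t : ℝ) : deriv (p * deriv p) t = deriv p t ^ 2 + p t * deriv (deriv p) t := by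
    rw [deriv_mul (hp1.differentiable_one t) (hp'.differentiable_one t), sq]
  simp only [hproduct, Pi.mul_apply] at hparts
  rw [← sub_eq_zero, ← integral_const_mul, ← integral_sub (hν.integrable (by fun_prop))
    (hν.integrable (by fun_prop))] at hparts
  unfold zonalEnergy zonalJacobi
  rw [eq_neg_iff_add_eq_zero, ← integral_add (hν.integrable (by fun_prop))
    (hν.integrable (by fun_prop)), ← hparts]
  congr with x
  ring

lemma integral_inner_pow_recurrence (hν : IsSphericalMeasure ν) {u : E} (hu : ‖u‖ = 1) (k : ℕ) :
    (2 * k + 1) * ∫ x, ⟪u, x⟫ ^ (2 * k) ∂ν =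
      (finrank ℝ E + 2 * k) * ∫ x, ⟪u, x⟫ ^ (2 * (k + 1)) ∂ν := by
  have hparts := hν.integral_one_sub_sq_mul_deriv (f := (· ^ (2 * k + 1))) (by fun_prop) hu
  have hint (j : ℕ) : Integrable (fun x ↦ ⟪u, x⟫ ^ j) ν := hν.integrable (by fun_prop)
  have hleft (t : ℝ) : (1 - t ^ 2) * deriv (· ^ (2 * k + 1)) t =
      (2 * k + 1) * (t ^ (2 * k) - t ^ (2 * (k + 1))) := by
    simp only [deriv_pow_field, Nat.cast_add, Nat.cast_mul, Nat.cast_ofNat, Nat.cast_one,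
      Nat.add_sub_cancel]
    ring
  have hright (t : ℝ) : t ^ (2 * k + 1) * t = t ^ (2 * (k + 1)) := by ring
  simp only [hleft, hright] at hparts
  rw [integral_const_mul, integral_sub (hint _) (hint _)] at hparts
  linear_combination hparts

lemma integral_inner_pow_pos (hν : IsSphericalMeasure ν) (hν₀ : ν ≠ 0) {u : E} (hu : ‖u‖ = 1)
    (k : ℕ) : 0 < ∫ x, ⟪u, x⟫ ^ (2 * k) ∂ν := by
  have := hν.isFiniteMeasure
  have : Nontrivial E := ⟨u, 0, norm_ne_zero_iff.1 (hu ▸ one_ne_zero)⟩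
  have hdim : 0 < (finrank ℝ E : ℝ) := Nat.cast_pos.2 finrank_pos
  induction k with
  | zero => simpa [measureReal_def, ENNReal.toReal_pos_iff, pos_iff_ne_zero] using hν₀
  | succ k ih =>
    have hmul : 0 < (finrank ℝ E + 2 * k) * ∫ x, ⟪u, x⟫ ^ (2 * (k + 1)) ∂ν := by
      rw [← hν.integral_inner_pow_recurrence hu]
      positivity
    exact pos_of_mul_pos_right hmul (by positivity)

end IsSphericalMeasure

lemma contDiff_pPoly (n : ℕ) (c : ℝ) {k : WithTop ℕ∞} : ContDiff ℝ k (pPoly n c) := by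
  unfold pPoly
  fun_prop

-- The coefficients of `p` are the Taylor coefficients up to degree 6 of an even solution of the
-- Jacobi equation, so only the perturbation `c` and the top degree survive.
lemma zonalJacobi_pPoly (n : ℕ) (c t : ℝ) :
    zonalJacobi (n - 1) (pPoly n c) t =
      -((n - 1) * (c + (n + 1) * (n + 3) * (n + 5) / 48 * t ^ 6)) := by
  have hderiv (s : ℝ) : deriv (pPoly n c) s = (n - 1) * s + (n - 1) * (n + 1) / 6 * s ^ 3 +
      (n - 1) * (n + 1) * (n + 3) / 40 * s ^ 5 :=
    (((((hasDerivAt_pow 2 s).const_mul _).const_add _).add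
      ((hasDerivAt_pow 4 s).const_mul _)).add
      ((hasDerivAt_pow 6 s).const_mul _)).congr_deriv (by push_cast; ring) |>.deriv
  have hderiv₂ : deriv (deriv (pPoly n c)) t = (n - 1) + (n - 1) * (n + 1) / 2 * t ^ 2 +
      (n - 1) * (n + 1) * (n + 3) / 8 * t ^ 4 := by
    rw [funext hderiv]
    exact ((((hasDerivAt_id t).const_mul _).add ((hasDerivAt_pow 3 t).const_mul _)).add
      ((hasDerivAt_pow 5 t).const_mul _)).congr_deriv (by push_cast; ring) |>.deriv
  rw [zonalJacobi, hderiv₂, hderiv, pPoly]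
  ring

namespace IsSphericalMeasure

variable [MeasurableSpace E] [BorelSpace E] {ν : Measure E}

lemma zonalEnergy_pPoly (hν : IsSphericalMeasure ν) {u : E} (hu : ‖u‖ = 1) (c : ℝ) :
    zonalEnergy ν u (pPoly (finrank ℝ E) c) =
      (finrank ℝ E - 1) * ∫ x, pPoly (finrank ℝ E) c ⟪u, x⟫ *
        (c + (finrank ℝ E + 1) * (finrank ℝ E + 3) * (finrank ℝ E + 5) / 48 * ⟪u, x⟫ ^ 6) ∂ν := by
  rw [hν.zonalEnergy_eq_neg_integral_mul_zonalJacobi (contDiff_pPoly _ c) hu,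
    ← integral_neg, ← integral_const_mul]
  congr with x
  rw [zonalJacobi_pPoly]
  ring

lemma integral_pPoly_zero_mul_inner_pow_six_pos (hν : IsSphericalMeasure ν) (hν₀ : ν ≠ 0)
    (hdim : 3 ≤ finrank ℝ E) {u : E} (hu : ‖u‖ = 1) :
    0 < ∫ x, pPoly (finrank ℝ E) 0 ⟪u, x⟫ * ⟪u, x⟫ ^ 6 ∂ν := by
  obtain ⟨q, hq⟩ := Nat.exists_eq_add_of_le' hdim
  set m : ℕ → ℝ := fun k ↦ ∫ x, ⟪u, x⟫ ^ k ∂ν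
  have hexpand : ∫ x, pPoly (finrank ℝ E) 0 ⟪u, x⟫ * ⟪u, x⟫ ^ 6 ∂ν =
      (q + 2) / 2 * m 8 + (q + 2) * (q + 4) / 24 * m 10 +
        (q + 2) * (q + 4) * (q + 6) / 240 * m 12 - m 6 := by
    have hpoint (t : ℝ) : pPoly (finrank ℝ E) 0 t * t ^ 6 =
        (q + 2) / 2 * t ^ 8 + (q + 2) * (q + 4) / 24 * t ^ 10 +
          (q + 2) * (q + 4) * (q + 6) / 240 * t ^ 12 - t ^ 6 := by
      rw [hq, pPoly]
      push_cast
      ring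
    simp only [hpoint]
    rw [integral_sub, integral_add, integral_add, integral_const_mul, integral_const_mul,
      integral_const_mul] <;> exact hν.integrable (by fun_prop)
  have hrec (k : ℕ) : (2 * k + 1) * m (2 * k) = (q + 3 + 2 * k) * m (2 * (k + 1)) := by
    simpa [hq] using hν.integral_inner_pow_recurrence hu k
  have hm₆ : 7 * m 6 = (q + 9) * m 8 := by linear_combination hrec 3
  have hm₈ : 9 * m 8 = (q + 11) * m 10 := by linear_combination hrec 4
  have hm₁₀ : 11 * m 10 = (q + 13) * m 12 := by linear_combination hrec 5
  have hm₁₂ : 0 < m 12 := hν.integral_inner_pow_pos hν₀ hu 6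
  have hpositive : ∫ x, pPoly (finrank ℝ E) 0 ⟪u, x⟫ * ⟪u, x⟫ ^ 6 ∂ν =
      (10048 + 52984 * q + 11402 * q ^ 2 + 641 * q ^ 3) / 55440 * m 12 := by
    rw [hexpand]
    linear_combination (-1 / 7) * hm₆ + ((q + 2) / 18 - (q + 9) / 63) * hm₈ +
      ((q + 2) * (q + 4) / 264 + (q + 11) * ((q + 2) / 18 - (q + 9) / 63) / 11) * hm₁₀
  rw [hpositive]
  positivity

lemma eventually_zonalEnergy_pPoly_pos (hν : IsSphericalMeasure ν) (hν₀ : ν ≠ 0)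
    (hdim : 3 ≤ finrank ℝ E) {u : E} (hu : ‖u‖ = 1) :
    ∀ᶠ c in nhds 0, 0 < zonalEnergy ν u (pPoly (finrank ℝ E) c) := by
  have hdim' : (3 : ℝ) ≤ finrank ℝ E := mod_cast hdim
  simp only [hν.zonalEnergy_pPoly hu]
  set κ : ℝ := (finrank ℝ E + 1) * (finrank ℝ E + 3) * (finrank ℝ E + 5) / 48
  have := hν.isFiniteMeasure
  have hcont : Continuous fun c ↦
      ∫ x, pPoly (finrank ℝ E) c ⟪u, x⟫ * (c + κ * ⟪u, x⟫ ^ 6) ∂ν := by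
    rw [← Measure.restrict_eq_self_of_ae_mem hν.ae_mem_sphere]
    refine continuous_parametric_integral_of_continuous ?_ (isCompact_sphere 0 1)
    unfold pPoly Function.uncurry
    fun_prop
  refine (hcont.const_mul _).tendsto 0 |>.eventually_const_lt ?_
  simp only [zero_add, mul_left_comm _ κ, integral_const_mul]
  have hint := hν.integral_pPoly_zero_mul_inner_pow_six_pos hν₀ hdim hu
  have hcodim : 0 < (finrank ℝ E : ℝ) - 1 := by linarith
  positivity

end IsSphericalMeasure

end Sphere

/-- For `n ≥ 3` and all sufficiently small `c > 0`,
`∫_{S^{n−1}} ((1 − x_n²) p'(x_n)² − (n−1) p(x_n)²) dσ(x) > 0`, where the integral is with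
respect to the surface ((n−1)-dimensional Hausdorff) measure on the unit sphere
`S^{n−1} ⊂ ℝⁿ`. -/
theorem stmt_16 (n : ℕ) (hn : 3 ≤ n) :
    ∃ c₀ > (0:ℝ), ∀ c : ℝ, 0 < c → c < c₀ →
      0 < ∫ x in Metric.sphere (0 : EuclideanSpace ℝ (Fin n)) 1,
            ((1 - (x ⟨n - 1, by omega⟩) ^ 2) * (deriv (pPoly n c) (x ⟨n - 1, by omega⟩)) ^ 2
              - ((n:ℝ) - 1) * (pPoly n c (x ⟨n - 1, by omega⟩)) ^ 2)
          ∂μH[(n:ℝ) - 1] := by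
  set l : Fin n := ⟨n - 1, by omega⟩
  let u : EuclideanSpace ℝ (Fin n) := EuclideanSpace.single l 1
  have : Nonempty (Fin n) := ⟨l⟩
  have hu : ‖u‖ = 1 := by simp [u]
  have hν := IsSphericalMeasure.hausdorffMeasure_restrict_sphere (EuclideanSpace ℝ (Fin n))
  have hν₀ := Measure.restrict_eq_zero.not.2
    (hausdorffMeasure_sphere_pos (EuclideanSpace ℝ (Fin n))).ne'
  have hpos := hν.eventually_zonalEnergy_pPoly_pos hν₀ (by simpa using hn) hu
  simp only [finrank_euclideanSpace_fin] at hpos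
  obtain ⟨ε, hε, hball⟩ := Metric.eventually_nhds_iff.1 hpos
  refine ⟨ε, hε, fun c hc hcε ↦ ?_⟩
  have henergy := hball (show dist c 0 < ε by rwa [dist_zero_right, Real.norm_of_nonneg hc.le])
  simpa [zonalEnergy, u, EuclideanSpace.inner_single_left] using henergy
end
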